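/- Let (m(s), s ∈ [0,1]) be a standard Brownian meander and (R(s), s ∈ [0,1]) a three-dimensional Bessel process started at 0. For every measurable non-negative functional F on continuous paths on [0,1], E[ F(m(s), s ∈ [0,1]) ] = (π/2)^{1/2} · E[ (1/R(1)) · F(R(s), s ∈ [0,1]) ]. -/

import Mathlib

open MeasureTheory ProbabilityTheory Real Set Filter

noncomputable section

variable {Ω : Type*} [MeasurableSpace Ω]

/-- A standard one-dimensional Brownian motion (indexed by `ℝ`, with the relevant
properties required for nonnegative times): starts at `0`, has continuous paths,
independent increments, and Gaussian increments of variance `t - s`. -/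
structure IsStdBM (P : Measure Ω) (B : ℝ → Ω → ℝ) : Prop where
  measurable : ∀ t : ℝ, Measurable (B t)
  start : ∀ ω, B 0 ω = 0
  cont : ∀ ω, Continuous fun t => B t ω
  indep : ∀ (n : ℕ) (t : Fin (n + 1) → ℝ), (∀ i, 0 ≤ t i) → Monotone t →
    iIndepFun
      (fun (i : Fin n) ω => B (t i.succ) ω - B (t i.castSucc) ω) P
  gauss : ∀ s t : ℝ, 0 ≤ s → s ≤ t →
    P.map (fun ω => B t ω - B s ω) = gaussianReal 0 (Real.toNNReal (t - s))

/-- A standard `d`-dimensional Brownian motion started at `0`: the coordinate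
processes are independent standard one-dimensional Brownian motions. -/
structure IsStdBMVec (d : ℕ) (P : Measure Ω) (B : ℝ → Ω → EuclideanSpace ℝ (Fin d)) : Prop where
  coord : ∀ i : Fin d, IsStdBM P (fun t ω => B t ω i)
  indepCoord : iIndepFun
    (fun (i : Fin d) ω => fun t : ℝ => B t ω i) P

/-- Last zero of `W` in `[0,1]`. -/
def lastZero (W : ℝ → Ω → ℝ) (ω : Ω) : ℝ := sSup {t ∈ Icc (0:ℝ) 1 | W t ω = 0}

/-- `m` is a standard Brownian meander: obtained from a Brownian motion `W` by
`m s = |W (g + s (1 - g))| / √(1 - g)`, where `g` is the last zero of `W` before time `1`. -/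
def IsBrownianMeander (P : Measure Ω) (m : ℝ → Ω → ℝ) : Prop :=
  ∃ W : ℝ → Ω → ℝ, IsStdBM P W ∧
    ∀ ω, ∀ s ∈ Icc (0:ℝ) 1,
      m s ω = |W (lastZero W ω + s * (1 - lastZero W ω)) ω| / Real.sqrt (1 - lastZero W ω)

/-- Running maximum `X̄(t) = sup_{s ∈ [0,t]} X(s)`. -/
def runMax (X : ℝ → Ω → ℝ) (t : ℝ) (ω : Ω) : ℝ := ⨆ s : Icc (0:ℝ) t, X s ω

/-- Maximal drawdown on `[0,T]` : `sup_{s ∈ [0,T]} (X̄(s) - X(s))`. -/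
def maxDDOn (X : ℝ → Ω → ℝ) (T : ℝ) (ω : Ω) : ℝ := ⨆ s : Icc (0:ℝ) T, (runMax X s ω - X s ω)

/-- Drawdown time `τ_λ^X := inf {t ≥ 0 : X̄(t) - X(t) ≥ λ}`. -/
def ddTime (lam : ℝ) (X : ℝ → Ω → ℝ) (ω : Ω) : ℝ :=
  sInf {t | 0 ≤ t ∧ lam ≤ runMax X t ω - X t ω}

/-- Three-dimensional Bessel process built from a 3-dimensional Brownian motion. -/
def bessel3 (β : ℝ → Ω → EuclideanSpace ℝ (Fin 3)) (t : ℝ) (ω : Ω) : ℝ := ‖β t ω‖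

/-- Squared four-dimensional Bessel process built from a 4-dimensional Brownian motion. -/
def sqBessel4 (γ : ℝ → Ω → EuclideanSpace ℝ (Fin 4)) (t : ℝ) (ω : Ω) : ℝ := ‖γ t ω‖ ^ 2

end

open scoped ENNReal

/-!
Integrating the planar part of a Gaussian vector in `ℝ³` in polar coordinates exhibits, on the
half-line, the transition density of the three-dimensional Bessel process as
`y / x * (p(x, y) - p(x, -y))`, where `p` is the Gaussian kernel. By the reflection principle
`p(x, y) - p(x, -y)` is the transition density of Brownian motion killed at `0`, so the modulus of
the killed motion is the `h`-transform, with `h(x) = x`, of the Bessel process: started at `x`, its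
path law is `x * E_x[F(R) / R 1]`.

Let `a` be the first point after the last zero `g` in a grid. The event that `g` lies in the cell
ending at `a` says that `W` has a zero in that cell but none in `[a, 1]`, so by the Markov property
the rescaled path on `[a, 1]` follows the killed law from its starting point, which tends to `0` as
the mesh does. The killed mass from `x` is at most `√(2 / π) * x`, and `x ↦ E_x[F(R) / R 1]` is
lower semicontinuous by Fatou's lemma; summing over the cells gives
`E[F(R) / R 1] ≤ √(2 / π) * E[F(m)]` for bounded continuous cylinder functionals `F ≥ 0`. Both sides
define measures of the same total mass, so complementing `F` turns the inequality into an equality.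
-/

namespace Imhof

section GaussianKernel

lemma lintegral_pi_cons {n : ℕ} (μ : Measure ℝ) [SigmaFinite μ] {f : (Fin (n + 1) → ℝ) → ℝ≥0∞}
    (hf : Measurable f) :
    ∫⁻ z, f z ∂(Measure.pi fun _ => μ) =
      ∫⁻ a, ∫⁻ v, f (Fin.cons a v) ∂(Measure.pi fun _ => μ) ∂μ := by
  have e := (measurePreserving_piFinSuccAbove (fun _ : Fin (n + 1) => μ) 0).symm
  rw [← e.lintegral_comp hf]
  exact (lintegral_prod _ (hf.comp e.measurable).aemeasurable).trans <| by
    simp only [MeasurableEquiv.piFinSuccAbove_symm_apply, Fin.insertNthEquiv_zero]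
    rfl

/-- The first coordinate vector of `ℝ³`, serving as a reference direction. -/
noncomputable def axis : EuclideanSpace ℝ (Fin 3) := EuclideanSpace.single 0 1

lemma norm_axis : ‖axis‖ = 1 := by simp [axis]

/-- The transition semigroup of the three-dimensional Bessel process, acting on functions of the
radius. By rotation invariance the starting point may be placed anywhere on the sphere of
radius `x`; it is put on a fixed axis. -/
noncomputable def besselSemigroup (t : ℝ) (h : ℝ → ℝ≥0∞) (x : ℝ) : ℝ≥0∞ :=
  ∫⁻ z, h ‖x • axis + √t • z‖ ∂(stdGaussian (EuclideanSpace ℝ (Fin 3)))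

lemma besselSemigroup_norm (t : ℝ) (h : ℝ → ℝ≥0∞) (v : EuclideanSpace ℝ (Fin 3)) :
    besselSemigroup t h ‖v‖ = ∫⁻ z, h ‖v + √t • z‖ ∂(stdGaussian _) := by
  have hnorm : ‖v‖ = ‖‖v‖ • axis‖ := by simp [norm_smul, norm_axis]
  let f := Submodule.reflection (ℝ ∙ (v - ‖v‖ • axis))ᗮ
  have hfv : f v = ‖v‖ • axis := Submodule.reflection_sub hnorm
  have hmp : MeasurePreserving f (stdGaussian (EuclideanSpace ℝ (Fin 3))) (stdGaussian _) :=
    ⟨f.continuous.measurable, stdGaussian_map f⟩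
  rw [besselSemigroup, ← hmp.lintegral_comp_emb f.toHomeomorph.measurableEmbedding]
  refine lintegral_congr fun z => ?_
  rw [← hfv, ← map_smul, ← map_add, f.norm_map]

lemma measurable_besselSemigroup (t : ℝ) {h : ℝ → ℝ≥0∞} (hh : Measurable h) :
    Measurable (besselSemigroup t h) :=
  Measurable.lintegral_prod_right'
    (f := fun p : ℝ × EuclideanSpace ℝ (Fin 3) => h ‖p.1 • axis + √t • p.2‖) (by fun_prop)

lemma besselSemigroup_zero (h : ℝ → ℝ≥0∞) {x : ℝ} (hx : 0 ≤ x) :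
    besselSemigroup 0 h x = h x := by
  simp [besselSemigroup, norm_smul, norm_axis, abs_of_nonneg hx]

lemma besselSemigroup_eq_one {t : ℝ} (ht : 0 < t) (h : ℝ → ℝ≥0∞) (x : ℝ) :
    besselSemigroup t h x = besselSemigroup 1 (fun r => h (√t * r)) (x / √t) := by
  have hs : 0 < √t := sqrt_pos.2 ht
  refine lintegral_congr fun z => ?_
  simp only
  nth_rw 2 [← norm_of_nonneg hs.le]
  rw [← norm_smul, smul_add, smul_smul, mul_div_cancel₀ _ hs.ne', sqrt_one, one_smul]

lemma gaussianPDFReal_zero_one_mul (b c : ℝ) :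
    gaussianPDFReal 0 1 b * gaussianPDFReal 0 1 c = (2 * π)⁻¹ * exp (-(b ^ 2 + c ^ 2) / 2) := by
  have h : √(2 * π) * √(2 * π) = 2 * π := mul_self_sqrt (by positivity)
  simp only [gaussianPDFReal, NNReal.coe_one, mul_one, sub_zero]
  rw [mul_mul_mul_comm, ← mul_inv, h, ← exp_add]
  ring_nf

lemma lintegral_gaussianReal_one (x : ℝ) (f : ℝ → ℝ≥0∞) :
    ∫⁻ a, f a ∂(gaussianReal x 1) = ∫⁻ a, ENNReal.ofReal (gaussianPDFReal x 1 a) * f a := by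
  rw [gaussianReal_of_var_ne_zero _ one_ne_zero,
    lintegral_withDensity_eq_lintegral_mul_non_measurable _ (measurable_gaussianPDF _ _)
      (ae_of_all _ fun _ => ENNReal.ofReal_lt_top)]
  rfl

lemma lintegral_gaussianReal_gaussianReal {f : ℝ × ℝ → ℝ≥0∞} (hf : Measurable f) :
    ∫⁻ b, ∫⁻ c, f (b, c) ∂(gaussianReal 0 1) ∂(gaussianReal 0 1) =
      ∫⁻ p : ℝ × ℝ, ENNReal.ofReal ((2 * π)⁻¹ * exp (-(p.1 ^ 2 + p.2 ^ 2) / 2)) * f p := by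
  rw [Measure.volume_eq_prod, lintegral_prod _ (by fun_prop),
    lintegral_gaussianReal_one]
  refine lintegral_congr fun b => ?_
  rw [lintegral_gaussianReal_one, ← lintegral_const_mul _ (by fun_prop)]
  refine lintegral_congr fun c => ?_
  rw [← mul_assoc, ← ENNReal.ofReal_mul (gaussianPDFReal_nonneg _ _ _),
    gaussianPDFReal_zero_one_mul]

lemma lintegral_gaussianReal_sq_add_sq {G : ℝ → ℝ≥0∞} (hG : Measurable G) :
    ∫⁻ b, ∫⁻ c, G (b ^ 2 + c ^ 2) ∂(gaussianReal 0 1) ∂(gaussianReal 0 1) =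
      ∫⁻ ρ in Ioi (0 : ℝ), ENNReal.ofReal (ρ * exp (-ρ ^ 2 / 2)) * G (ρ ^ 2) := by
  have hpolar (p : ℝ × ℝ) : (polarCoord.symm p).1 ^ 2 + (polarCoord.symm p).2 ^ 2 = p.1 ^ 2 := by
    simp only [polarCoord_symm_apply]
    linear_combination p.1 ^ 2 * cos_sq_add_sin_sq p.2
  rw [lintegral_gaussianReal_gaussianReal (f := fun p => G (p.1 ^ 2 + p.2 ^ 2)) (by fun_prop),
    ← lintegral_comp_polarCoord_symm, polarCoord_target, Measure.volume_eq_prod,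
    ← Measure.prod_restrict]
  simp_rw [hpolar]
  rw [lintegral_prod _ (by fun_prop)]
  refine setLIntegral_congr_fun measurableSet_Ioi fun ρ (hρ : 0 < ρ) => ?_
  simp only [smul_eq_mul, lintegral_const, Measure.restrict_apply_univ, volume_Ioo]
  rw [← mul_assoc, mul_right_comm, ← ENNReal.ofReal_mul hρ.le, ← ENNReal.ofReal_mul (by positivity)]
  congr 2
  field

lemma image_sqrt_sq_add_sq_Ioi (a : ℝ) : (fun ρ => √(a ^ 2 + ρ ^ 2)) '' Ioi 0 = Ioi |a| := by
  ext r
  refine ⟨?_, fun hr => ?_⟩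
  · rintro ⟨ρ, hρ : 0 < ρ, rfl⟩
    exact lt_sqrt_of_sq_lt (by rw [sq_abs]; nlinarith)
  · have hr0 : 0 < r := (abs_nonneg a).trans_lt hr
    have hsq : 0 < r ^ 2 - a ^ 2 := sub_pos.2 (sq_lt_sq.2 (hr.trans_eq (abs_of_pos hr0).symm))
    exact ⟨√(r ^ 2 - a ^ 2), sqrt_pos.2 hsq, by simp [sq_sqrt hsq.le, sqrt_sq hr0.le]⟩

lemma lintegral_sqrt_sq_add_sq (a : ℝ) (h : ℝ → ℝ≥0∞) :
    ∫⁻ ρ in Ioi (0 : ℝ), ENNReal.ofReal (ρ * exp (-ρ ^ 2 / 2)) * h √(a ^ 2 + ρ ^ 2) =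
      ∫⁻ r in Ioi |a|, ENNReal.ofReal (r * exp ((a ^ 2 - r ^ 2) / 2)) * h r := by
  have hpos {ρ : ℝ} (hρ : 0 < ρ) : 0 < a ^ 2 + ρ ^ 2 := by positivity
  rw [← image_sqrt_sq_add_sq_Ioi, lintegral_image_eq_lintegral_abs_deriv_mul
    (f' := fun ρ => ρ / √(a ^ 2 + ρ ^ 2)) measurableSet_Ioi]
  · refine setLIntegral_congr_fun measurableSet_Ioi fun ρ (hρ : 0 < ρ) => ?_
    have hp := hpos hρ
    rw [← mul_assoc, ← ENNReal.ofReal_mul (by positivity), abs_of_pos (by positivity),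
      sq_sqrt hp.le, ← mul_assoc, div_mul_cancel₀ _ (by positivity)]
    ring_nf
  · intro ρ hρ
    have hsq : HasDerivAt (fun ρ : ℝ => a ^ 2 + ρ ^ 2) (2 * ρ) ρ := by
      simpa using (hasDerivAt_pow 2 ρ).const_add (a ^ 2)
    simpa only [mul_div_mul_left _ _ (two_ne_zero' ℝ)] using
      (hsq.sqrt (hpos hρ).ne').hasDerivWithinAt (s := Ioi 0)
  · intro b hb c hc hbc
    have := (sqrt_inj (hpos hb).le (hpos hc).le).1 hbc
    exact (sq_eq_sq₀ (le_of_lt hb) (le_of_lt hc)).1 (by linarith)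

lemma besselSemigroup_one_eq_iterated {h : ℝ → ℝ≥0∞} (hh : Measurable h) (x : ℝ) :
    besselSemigroup 1 h x = ∫⁻ a, ∫⁻ b, ∫⁻ c, h √((x + a) ^ 2 + (b ^ 2 + c ^ 2))
      ∂(gaussianReal 0 1) ∂(gaussianReal 0 1) ∂(gaussianReal 0 1) := by
  rw [besselSemigroup, ← map_pi_eq_stdGaussian, lintegral_map (by fun_prop) (by fun_prop),
    lintegral_pi_cons _ (by fun_prop)]
  refine lintegral_congr fun a => ?_
  rw [lintegral_pi_cons _ (by fun_prop)]
  refine lintegral_congr fun b => ?_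
  rw [lintegral_pi_cons _ (by fun_prop)]
  refine lintegral_congr fun c => ?_
  have htwo (v : Fin 0 → ℝ) : (Fin.cons a (Fin.cons b (Fin.cons c v)) : Fin 3 → ℝ) 2 = c := rfl
  simp [EuclideanSpace.norm_eq, Fin.sum_univ_three, axis, add_assoc, htwo]

lemma besselSemigroup_one_eq_gaussianReal {h : ℝ → ℝ≥0∞} (hh : Measurable h) (x : ℝ) :
    besselSemigroup 1 h x =
      ∫⁻ a, (∫⁻ r in Ioi |a|, ENNReal.ofReal (r * exp ((a ^ 2 - r ^ 2) / 2)) * h r)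
        ∂(gaussianReal x 1) := by
  have hmeas : Measurable fun a => ∫⁻ b, ∫⁻ c, h √(a ^ 2 + (b ^ 2 + c ^ 2))
      ∂(gaussianReal 0 1) ∂(gaussianReal 0 1) :=
    Measurable.lintegral_prod_right' (f := fun p : ℝ × ℝ => ∫⁻ c, h √(p.1 ^ 2 + (p.2 ^ 2 + c ^ 2))
      ∂(gaussianReal 0 1)) (by fun_prop)
  have hshift : gaussianReal x 1 = (gaussianReal 0 1).map (x + ·) := by
    rw [gaussianReal_map_const_add, zero_add]
  refine .trans ?_ (lintegral_congr fun a => (lintegral_gaussianReal_sq_add_sq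
    (G := fun u => h √(a ^ 2 + u)) (by fun_prop)).trans (lintegral_sqrt_sq_add_sq a h))
  rw [besselSemigroup_one_eq_iterated hh, hshift, lintegral_map hmeas (by fun_prop)]

lemma lintegral_lintegral_Ioi_abs {F : ℝ → ℝ → ℝ≥0∞} (hF : Measurable (Function.uncurry F)) :
    ∫⁻ a, ∫⁻ r in Ioi |a|, F a r = ∫⁻ r in Ioi 0, ∫⁻ a in Ioo (-r) r, F a r := by
  have hset : MeasurableSet {p : ℝ × ℝ | |p.1| < p.2} :=
    measurableSet_lt (by fun_prop) (by fun_prop)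
  have hleft (a : ℝ) : ∫⁻ r in Ioi |a|, F a r =
      ∫⁻ r in Ioi 0, {p : ℝ × ℝ | |p.1| < p.2}.indicator (Function.uncurry F) (a, r) := by
    rw [← inter_eq_left.2 (Ioi_subset_Ioi (abs_nonneg a)), ← setLIntegral_indicator
      measurableSet_Ioi]
    rfl
  have hright (r : ℝ) : ∫⁻ a in Ioo (-r) r, F a r =
      ∫⁻ a, {p : ℝ × ℝ | |p.1| < p.2}.indicator (Function.uncurry F) (a, r) := by
    rw [← lintegral_indicator measurableSet_Ioo]
    simp only [indicator, mem_Ioo, mem_ofPred_eq, abs_lt, Function.uncurry]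
  simp_rw [hleft, hright]
  exact lintegral_lintegral_swap (f := fun a r =>
    {p : ℝ × ℝ | |p.1| < p.2}.indicator (Function.uncurry F) (a, r))
    (hF.indicator hset).aemeasurable

/-- The density in `r` of the unit-time transition law of the three-dimensional Bessel process
started at `x`. The first coordinate `a` of the underlying Gaussian vector is kept as an
integration variable: given `a`, the radius has density `r * exp ((a ^ 2 - r ^ 2) / 2)` on
`(|a|, ∞)`. -/
noncomputable def besselDensity (x r : ℝ) : ℝ :=
  r * exp (-r ^ 2 / 2) * ∫ a in (-r)..r, gaussianPDFReal x 1 a * exp (a ^ 2 / 2)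

lemma gaussianPDFReal_one_mul_exp (x a : ℝ) :
    gaussianPDFReal x 1 a * exp (a ^ 2 / 2) = (√(2 * π))⁻¹ * exp (x * a - x ^ 2 / 2) := by
  rw [gaussianPDFReal, mul_assoc, ← exp_add, NNReal.coe_one]
  ring_nf

lemma besselDensity_nonneg (x : ℝ) {r : ℝ} (hr : 0 ≤ r) : 0 ≤ besselDensity x r :=
  mul_nonneg (by positivity) <| intervalIntegral.integral_nonneg (by linarith) fun a _ =>
    mul_nonneg (gaussianPDFReal_nonneg _ _ _) (exp_pos _).le

lemma besselSemigroup_one_eq_besselDensity {h : ℝ → ℝ≥0∞} (hh : Measurable h) (x : ℝ) :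
    besselSemigroup 1 h x = ∫⁻ r in Ioi 0, ENNReal.ofReal (besselDensity x r) * h r := by
  have : Measurable (gaussianPDFReal x 1) := measurable_gaussianPDFReal _ _
  rw [besselSemigroup_one_eq_gaussianReal hh, lintegral_gaussianReal_one,
    lintegral_congr fun a => (lintegral_const_mul _ (by fun_prop)).symm]
  refine (lintegral_lintegral_Ioi_abs (by simp only [Function.uncurry_def]; fun_prop)).trans ?_
  refine setLIntegral_congr_fun measurableSet_Ioi fun r (hr : 0 < r) => ?_
  have hint : IntegrableOn (fun a => gaussianPDFReal x 1 a * exp (a ^ 2 / 2)) (Ioo (-r) r) := by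
    simp_rw [gaussianPDFReal_one_mul_exp]
    exact (Continuous.integrableOn_Icc (by fun_prop)).mono_set Ioo_subset_Icc_self
  have hnn (a : ℝ) : 0 ≤ gaussianPDFReal x 1 a * exp (a ^ 2 / 2) :=
    mul_nonneg (gaussianPDFReal_nonneg _ _ _) (exp_pos _).le
  rw [besselDensity, intervalIntegral.integral_of_le (by linarith), integral_Ioc_eq_integral_Ioo,
    ENNReal.ofReal_mul (by positivity), ofReal_integral_eq_lintegral_ofReal hint (ae_of_all _ hnn),
    mul_right_comm, ← lintegral_const_mul _ (by fun_prop)]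
  refine lintegral_congr fun a => ?_
  rw [← mul_assoc, ← ENNReal.ofReal_mul (gaussianPDFReal_nonneg _ _ _), mul_right_comm,
    ← ENNReal.ofReal_mul (by positivity)]
  congr 2
  rw [sub_div, sub_eq_add_neg, exp_add]
  ring_nf

lemma mul_besselDensity (x r : ℝ) :
    x * besselDensity x r = r * (gaussianPDFReal x 1 r - gaussianPDFReal x 1 (-r)) := by
  have hderiv (a : ℝ) : HasDerivAt (fun a => gaussianPDFReal x 1 a * exp (a ^ 2 / 2))
      (x * (gaussianPDFReal x 1 a * exp (a ^ 2 / 2))) a := by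
    simp_rw [gaussianPDFReal_one_mul_exp x]
    have := ((((hasDerivAt_id a).const_mul x).sub_const (x ^ 2 / 2)).exp).const_mul (√(2 * π))⁻¹
    exact this.congr_deriv (by rw [id_eq]; ring)
  have hint : IntervalIntegrable (fun a => x * (gaussianPDFReal x 1 a * exp (a ^ 2 / 2)))
      volume (-r) r := by
    simp_rw [gaussianPDFReal_one_mul_exp]
    exact Continuous.intervalIntegrable (by fun_prop) _ _
  have hFTC := intervalIntegral.integral_eq_sub_of_hasDerivAt (fun a _ => hderiv a) hint
  have hexp : exp (-r ^ 2 / 2) * exp (r ^ 2 / 2) = 1 := by rw [← exp_add]; ring_nf; simp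
  rw [intervalIntegral.integral_const_mul, neg_sq] at hFTC
  rw [besselDensity]
  linear_combination r * exp (-r ^ 2 / 2) * hFTC +
    r * (gaussianPDFReal x 1 r - gaussianPDFReal x 1 (-r)) * hexp

/-- The reflection identity behind the `h`-transform: on the half-line, the transition density of
Brownian motion killed at `0`, multiplied by `r / x`, is the Bessel transition density. -/
lemma ofReal_mul_besselSemigroup_one {h : ℝ → ℝ≥0∞} (hh : Measurable h) {x : ℝ} (hx : 0 ≤ x) :
    ENNReal.ofReal x * besselSemigroup 1 h x +
        ∫⁻ a, ENNReal.ofReal (-a) * h (-a) ∂(gaussianReal x 1) =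
      ∫⁻ a, ENNReal.ofReal a * h a ∂(gaussianReal x 1) := by
  have : Measurable (gaussianPDFReal x 1) := measurable_gaussianPDFReal _ _
  have hpos (f : ℝ → ℝ) : ∫⁻ r, ENNReal.ofReal (f r) * (ENNReal.ofReal r * h r) =
      ∫⁻ r in Ioi 0, ENNReal.ofReal (f r * r) * h r := by
    rw [← setLIntegral_eq_of_support_subset (s := Ioi 0)]
    · refine setLIntegral_congr_fun measurableSet_Ioi fun r (hr : 0 < r) => ?_
      rw [ENNReal.ofReal_mul' hr.le, mul_assoc]
    · refine fun r hr => ENNReal.ofReal_pos.1 (pos_iff_ne_zero.2 fun h0 => hr ?_)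
      simp only [h0, zero_mul, mul_zero]
  have hneg : ∫⁻ a, ENNReal.ofReal (-a) * h (-a) ∂(gaussianReal x 1) =
      ∫⁻ r in Ioi 0, ENNReal.ofReal (gaussianPDFReal x 1 (-r) * r) * h r := by
    rw [lintegral_gaussianReal_one, ← lintegral_neg_eq_self,
      ← hpos fun r => gaussianPDFReal x 1 (-r)]
    simp only [neg_neg]
  rw [hneg, lintegral_gaussianReal_one, hpos, besselSemigroup_one_eq_besselDensity hh,
    ← lintegral_const_mul' _ _ ENNReal.ofReal_ne_top, ← lintegral_add_right _ (by fun_prop)]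
  refine setLIntegral_congr_fun measurableSet_Ioi fun r (hr : 0 < r) => ?_
  rw [← mul_assoc, ← add_mul, ← ENNReal.ofReal_mul hx, ← ENNReal.ofReal_add
    (mul_nonneg hx (besselDensity_nonneg x hr.le))
    (mul_nonneg (gaussianPDFReal_nonneg _ _ _) hr.le), mul_besselDensity]
  ring_nf

lemma two_mul_inv_sqrt_two_pi : 2 * (√(2 * π))⁻¹ = √(2 / π) := by
  rw [eq_comm, sqrt_eq_iff_mul_self_eq (by positivity) (by positivity), mul_mul_mul_comm,
    ← mul_inv, mul_self_sqrt (by positivity)]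
  field

lemma besselSemigroup_one_inv_zero :
    besselSemigroup 1 (fun r => ENNReal.ofReal r⁻¹) 0 = ENNReal.ofReal √(2 / π) := by
  have hone : ∫⁻ ρ in Ioi (0 : ℝ), ENNReal.ofReal (ρ * exp (-ρ ^ 2 / 2)) = 1 := by
    simpa using (lintegral_gaussianReal_sq_add_sq (G := 1) measurable_one).symm
  rw [besselSemigroup_one_eq_besselDensity (by fun_prop), ← mul_one (ENNReal.ofReal _), ← hone,
    ← lintegral_const_mul _ (by fun_prop)]
  refine setLIntegral_congr_fun measurableSet_Ioi fun r (hr : 0 < r) => ?_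
  rw [← ENNReal.ofReal_mul (besselDensity_nonneg 0 hr.le), ← ENNReal.ofReal_mul (by positivity),
    besselDensity, ← two_mul_inv_sqrt_two_pi]
  simp only [gaussianPDFReal_one_mul_exp, zero_mul, zero_pow two_ne_zero, zero_div, sub_zero,
    exp_zero, mul_one, intervalIntegral.integral_const, smul_eq_mul]
  congr 1
  field

lemma gaussianReal_Ioc_le (x a b : ℝ) :
    gaussianReal x 1 (Ioc a b) ≤ ENNReal.ofReal ((√(2 * π))⁻¹ * (b - a)) := by
  have hpdf (u : ℝ) : gaussianPDF x 1 u ≤ ENNReal.ofReal (√(2 * π))⁻¹ := by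
    refine ENNReal.ofReal_le_ofReal ?_
    rw [gaussianPDFReal, NNReal.coe_one, mul_one]
    exact mul_le_of_le_one_right (by positivity) (exp_le_one_iff.2 (by
      linarith [sq_nonneg (u - x)]))
  rw [gaussianReal_apply _ one_ne_zero, ENNReal.ofReal_mul (by positivity), ← volume_Ioc,
    ← setLIntegral_const]
  exact lintegral_mono hpdf

lemma besselSemigroup_one_inv_le {x : ℝ} (hx : 0 < x) :
    besselSemigroup 1 (fun r => ENNReal.ofReal r⁻¹) x ≤ ENNReal.ofReal √(2 / π) := by
  have hind (a : ℝ) : ENNReal.ofReal a * ENNReal.ofReal a⁻¹ = (Ioi 0).indicator 1 a := by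
    rcases le_or_gt a 0 with ha | ha
    · simp [ENNReal.ofReal_of_nonpos ha, ha]
    · rw [← ENNReal.ofReal_mul ha.le, mul_inv_cancel₀ ha.ne', indicator_of_mem (mem_Ioi.2 ha),
        ENNReal.ofReal_one, Pi.one_apply]
  have hneg : ∫⁻ a, (Ioi (0 : ℝ)).indicator 1 (-a) ∂(gaussianReal x 1) =
      gaussianReal x 1 (Ioi (2 * x)) := by
    have hmap : (gaussianReal x 1).map (fun a => 2 * x - a) = gaussianReal x 1 := by
      rw [gaussianReal_map_const_sub]; ring_nf
    nth_rw 2 [← hmap]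
    rw [Measure.map_apply (by fun_prop) measurableSet_Ioi, ← lintegral_indicator_one
      (measurableSet_Ioi.preimage (by fun_prop))]
    simp [indicator]
  have hrefl :=
    ofReal_mul_besselSemigroup_one (h := fun r => ENNReal.ofReal r⁻¹) (by fun_prop) hx.le
  simp_rw [hind] at hrefl
  rw [hneg, lintegral_indicator_one measurableSet_Ioi] at hrefl
  rw [← ENNReal.mul_le_mul_iff_right (ENNReal.ofReal_pos.2 hx).ne' ENNReal.ofReal_ne_top,
    ← ENNReal.add_le_add_iff_right (measure_ne_top (gaussianReal x 1) (Ioi (2 * x)))]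
  calc ENNReal.ofReal x * _ + gaussianReal x 1 (Ioi (2 * x))
      = gaussianReal x 1 (Ioi 0) := hrefl
    _ ≤ gaussianReal x 1 (Ioc 0 (2 * x)) + gaussianReal x 1 (Ioi (2 * x)) := by
      rw [← Ioc_union_Ioi_eq_Ioi (a := 0) (b := 2 * x) (by linarith)]
      exact measure_union_le _ _
    _ ≤ ENNReal.ofReal x * ENNReal.ofReal √(2 / π) + gaussianReal x 1 (Ioi (2 * x)) := by
      gcongr
      refine (gaussianReal_Ioc_le x 0 (2 * x)).trans_eq ?_
      rw [← ENNReal.ofReal_mul hx.le, ← two_mul_inv_sqrt_two_pi]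
      ring_nf

end GaussianKernel

section Independence

variable {Ω : Type*} {m mΩ : MeasurableSpace Ω} {P : Measure Ω}

lemma lintegral_mul_eq_of_setLIntegral_eq (hm : m ≤ mΩ) {f g Y : Ω → ℝ≥0∞}
    (hf : Measurable f) (hg : Measurable g) (hY : Measurable[m] Y)
    (h : ∀ A, MeasurableSet[m] A → ∫⁻ ω in A, f ω ∂P = ∫⁻ ω in A, g ω ∂P) :
    ∫⁻ ω, Y ω * f ω ∂P = ∫⁻ ω, Y ω * g ω ∂P := by
  have trim_eq : (P.withDensity f).trim hm = (P.withDensity g).trim hm := by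
    refine @Measure.ext _ m _ _ fun A hA => ?_
    rw [trim_measurableSet_eq hm hA, trim_measurableSet_eq hm hA, withDensity_apply _ (hm A hA),
      withDensity_apply _ (hm A hA), h A hA]
  have lintegral_mul_eq {k : Ω → ℝ≥0∞} (hk : Measurable k) :
      ∫⁻ ω, Y ω * k ω ∂P = ∫⁻ ω, Y ω ∂(P.withDensity k).trim hm := by
    rw [lintegral_trim hm hY, lintegral_withDensity_eq_lintegral_mul _ hk (hY.mono hm le_rfl)]
    simp only [Pi.mul_apply, mul_comm]
  rw [lintegral_mul_eq hf, lintegral_mul_eq hg, trim_eq]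

variable [IsProbabilityMeasure P] {S E : Type*} [MeasurableSpace S] [MeasurableSpace E]

lemma lintegral_comp_prodMk_of_indep (hm : m ≤ mΩ) {U : Ω → S} {Y : Ω → E} (hU : Measurable[m] U)
    (hY : Measurable Y) (h : Indep m (MeasurableSpace.comap Y inferInstance) P)
    {f : S × E → ℝ≥0∞} (hf : Measurable f) :
    ∫⁻ ω, f (U ω, Y ω) ∂P = ∫⁻ ω, ∫⁻ y, f (U ω, y) ∂(P.map Y) ∂P := by
  have hU' : Measurable U := hU.mono hm le_rfl
  have hUY : IndepFun U Y P := by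
    rw [IndepFun_iff_Indep]
    exact indep_of_indep_of_le_left h hU.comap_le
  have : IsProbabilityMeasure (P.map Y) := Measure.isProbabilityMeasure_map hY.aemeasurable
  rw [← lintegral_map hf (hU'.prodMk hY),
    (indepFun_iff_map_prod_eq_prod_map_map hU'.aemeasurable hY.aemeasurable).1 hUY,
    lintegral_prod _ hf.aemeasurable, lintegral_map hf.lintegral_prod_right' hU']

lemma setLIntegral_comp_prodMk_of_indep (hm : m ≤ mΩ) {U : Ω → S} {Y : Ω → E}
    (hU : Measurable[m] U) (hY : Measurable Y)
    (h : Indep m (MeasurableSpace.comap Y inferInstance) P) {A : Set Ω} (hA : MeasurableSet[m] A)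
    {f : S × E → ℝ≥0∞} (hf : Measurable f) :
    ∫⁻ ω in A, f (U ω, Y ω) ∂P = ∫⁻ ω in A, ∫⁻ y, f (U ω, y) ∂(P.map Y) ∂P := by
  have key := lintegral_comp_prodMk_of_indep hm
    (((@measurable_const _ _ _ m (1 : ℝ≥0∞)).indicator hA).prodMk hU) hY h
    (f := fun p => p.1.1 * f (p.1.2, p.2)) (by fun_prop)
  rw [← lintegral_indicator (hm A hA), ← lintegral_indicator (hm A hA)]
  convert key using 1 <;> refine lintegral_congr fun ω => ?_ <;> by_cases hω : ω ∈ A <;> simp [hω]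

lemma indepFun_pi_of_iIndepFun_prodMk {ι : Type*} [Finite ι] {U : ι → Ω → S} {V : ι → Ω → E}
    (hU : ∀ i, Measurable (U i)) (hV : ∀ i, Measurable (V i))
    (h : iIndepFun (fun i ω => (U i ω, V i ω)) P) (hUV : ∀ i, IndepFun (U i) (V i) P) :
    IndepFun (fun ω i => U i ω) (fun ω i => V i ω) P := by
  have := Fintype.ofFinite ι
  have (i : ι) : IsProbabilityMeasure (P.map (U i)) :=
    Measure.isProbabilityMeasure_map (hU i).aemeasurable
  have (i : ι) : IsProbabilityMeasure (P.map (V i)) :=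
    Measure.isProbabilityMeasure_map (hV i).aemeasurable
  have law_pairs : P.map (fun ω i => (U i ω, V i ω)) =
      Measure.pi fun i => (P.map (U i)).prod (P.map (V i)) := by
    rw [(iIndepFun_iff_map_fun_eq_pi_map
      fun i => ((hU i).prodMk (hV i)).aemeasurable).1 h]
    congr 1 with i : 1
    exact (indepFun_iff_map_prod_eq_prod_map_map (hU i).aemeasurable (hV i).aemeasurable).1 (hUV i)
  have law_U : P.map (fun ω i => U i ω) = Measure.pi fun i => P.map (U i) :=
    (iIndepFun_iff_map_fun_eq_pi_map fun i => (hU i).aemeasurable).1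
      (h.comp (fun _ => Prod.fst) fun _ => measurable_fst)
  have law_V : P.map (fun ω i => V i ω) = Measure.pi fun i => P.map (V i) :=
    (iIndepFun_iff_map_fun_eq_pi_map fun i => (hV i).aemeasurable).1
      (h.comp (fun _ => Prod.snd) fun _ => measurable_snd)
  rw [indepFun_iff_map_prod_eq_prod_map_map (measurable_pi_lambda _ hU).aemeasurable
    (measurable_pi_lambda _ hV).aemeasurable, law_U, law_V,
    ← (measurePreserving_arrowProdEquivProdArrow S E ι (fun i => P.map (U i))
      fun i => P.map (V i)).map_eq, ← law_pairs,
    Measure.map_map (MeasurableEquiv.measurable _)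
      (measurable_pi_lambda _ fun i => (hU i).prodMk (hV i))]
  rfl

end Independence

section Filtered

variable {Ω : Type*} [mΩ : MeasurableSpace Ω]

/-- The filtration generated by the values of `X` at the nonnegative times up to the present. -/
def pastFiltration {E : Type*} [MeasurableSpace E] {X : ℝ → Ω → E} (hX : ∀ t, Measurable (X t)) :
    Filtration ℝ mΩ where
  seq t := MeasurableSpace.comap (fun ω (u : Icc (0 : ℝ) t) => X u ω) inferInstance
  mono' s t hst := by
    have restrict : Measurable fun (p : Icc (0 : ℝ) t → E) (u : Icc (0 : ℝ) s) =>
        p ⟨u, u.2.1, u.2.2.trans hst⟩ :=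
      measurable_pi_lambda _ fun u => measurable_pi_apply _
    exact (restrict.comp (comap_measurable fun ω (u : Icc (0 : ℝ) t) => X u ω)).comap_le
  le' t := (measurable_pi_lambda _ fun u : Icc (0 : ℝ) t => hX u).comap_le

lemma measurable_pastFiltration {E : Type*} [MeasurableSpace E] {X : ℝ → Ω → E}
    (hX : ∀ t, Measurable (X t)) {u t : ℝ} (hu : 0 ≤ u) (hut : u ≤ t) :
    Measurable[pastFiltration hX t] (X u) := by
  have eval : Measurable fun p : Icc (0 : ℝ) t → E => p ⟨u, hu, hut⟩ := measurable_pi_apply _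
  exact eval.comp (comap_measurable fun ω (v : Icc (0 : ℝ) t) => X v ω)

/-- One-dimensional Brownian motion with respect to a filtration, over nonnegative times and with
an arbitrary starting value `X 0`. -/
structure IsBrownianWrt (P : Measure Ω) (𝓕 : Filtration ℝ mΩ) (X : ℝ → Ω → ℝ) : Prop where
  continuous : ∀ ω, Continuous fun t => X t ω
  adapted : ∀ s, 0 ≤ s → Measurable[𝓕 s] (X s)
  indep : ∀ s t, 0 ≤ s → s ≤ t →
    Indep (𝓕 s) (MeasurableSpace.comap (fun ω => X t ω - X s ω) inferInstance) P
  gauss : ∀ s t, 0 ≤ s → s ≤ t →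
    P.map (fun ω => X t ω - X s ω) = gaussianReal 0 (t - s).toNNReal

namespace IsBrownianWrt

variable {P : Measure Ω} {𝓕 : Filtration ℝ mΩ} {X : ℝ → Ω → ℝ}

lemma measurable (hX : IsBrownianWrt P 𝓕 X) {s : ℝ} (hs : 0 ≤ s) : Measurable (X s) :=
  (hX.adapted s hs).mono (𝓕.le s) le_rfl

lemma measurable_sub (hX : IsBrownianWrt P 𝓕 X) {s t : ℝ} (hs : 0 ≤ s) (hst : s ≤ t) :
    Measurable fun ω => X t ω - X s ω :=
  (hX.measurable (hs.trans hst)).sub (hX.measurable hs)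

lemma neg (hX : IsBrownianWrt P 𝓕 X) : IsBrownianWrt P 𝓕 (fun t ω => -X t ω) := by
  have increment (s t : ℝ) :
      (fun ω => -X t ω - -X s ω) = (fun x => -x) ∘ fun ω => X t ω - X s ω := by
    ext ω
    simp only [Function.comp_apply]
    ring
  refine ⟨fun ω => (hX.continuous ω).neg, fun s hs => (hX.adapted s hs).neg,
    fun s t hs hst => ?_, fun s t hs hst => ?_⟩
  · rw [increment, ← MeasurableSpace.comap_comp]
    exact indep_of_indep_of_le_right (hX.indep s t hs hst)
      (MeasurableSpace.comap_mono measurable_neg.comap_le)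
  · rw [increment, ← Measure.map_map measurable_neg (hX.measurable_sub hs hst),
      hX.gauss s t hs hst, gaussianReal_map_neg, neg_zero]

lemma rescale (hX : IsBrownianWrt P 𝓕 X) {a c : ℝ} (ha : 0 ≤ a) (hc : 0 < c) :
    IsBrownianWrt P
      ⟨fun t => 𝓕 (a + c * t), fun s t hst => 𝓕.mono (by gcongr), fun t => 𝓕.le _⟩
      (fun t ω => X (a + c * t) ω / √c) := by
  have increment (s t : ℝ) : (fun ω => X (a + c * t) ω / √c - X (a + c * s) ω / √c) =
      (fun x => x / √c) ∘ fun ω => X (a + c * t) ω - X (a + c * s) ω := by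
    ext ω
    simp only [Function.comp_apply, sub_div]
  have nonneg {s : ℝ} (hs : 0 ≤ s) : 0 ≤ a + c * s := by positivity
  have le {s t : ℝ} (hst : s ≤ t) : a + c * s ≤ a + c * t := by gcongr
  refine ⟨fun ω => ((hX.continuous ω).comp (by fun_prop)).div_const _,
    fun s hs => (hX.adapted _ (nonneg hs)).div_const _, fun s t hs hst => ?_,
    fun s t hs hst => ?_⟩
  · rw [increment, ← MeasurableSpace.comap_comp]
    exact indep_of_indep_of_le_right (hX.indep _ _ (nonneg hs) (le hst))
      (MeasurableSpace.comap_mono (measurable_div_const' _).comap_le)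
  · rw [increment, ← Measure.map_map (by fun_prop) (hX.measurable_sub (nonneg hs) (le hst)),
      hX.gauss _ _ (nonneg hs) (le hst), gaussianReal_map_div_const, zero_div]
    congr 1
    ext
    simp only [NNReal.coe_div, NNReal.coe_mk, Real.sq_sqrt hc.le]
    rw [Real.coe_toNNReal _ (sub_nonneg.2 (le hst)), Real.coe_toNNReal _ (sub_nonneg.2 hst)]
    field

variable [IsProbabilityMeasure P]

lemma setLIntegral_increment (hX : IsBrownianWrt P 𝓕 X) {s t : ℝ} (hs : 0 ≤ s) (hst : s ≤ t)
    {A : Set Ω} (hA : MeasurableSet[𝓕 s] A) {f : ℝ × ℝ → ℝ≥0∞} (hf : Measurable f) :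
    ∫⁻ ω in A, f (X s ω, X t ω - X s ω) ∂P =
      ∫⁻ ω in A, ∫⁻ y, f (X s ω, y) ∂gaussianReal 0 (t - s).toNNReal ∂P := by
  rw [← hX.gauss s t hs hst]
  exact setLIntegral_comp_prodMk_of_indep (𝓕.le s) (hX.adapted s hs)
    (hX.measurable_sub hs hst) (hX.indep s t hs hst) hA hf

end IsBrownianWrt

lemma _root_.IsStdBM.indepFun_past {P : Measure Ω} {B : ℝ → Ω → ℝ} (hB : IsStdBM P B) {s t : ℝ}
    (hs : 0 ≤ s) (hst : s ≤ t) :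
    IndepFun (fun ω (u : Icc (0 : ℝ) s) => B u ω) (fun ω => B t ω - B s ω) P := by
  have hpre : IsPreBrownianReal (fun (t : NNReal) ω => B t ω) P := by
    refine HasIndepIncrements.isPreBrownianReal_of_hasLaw
      (fun t => ⟨(hB.measurable t).aemeasurable, ?_⟩) fun n t ht =>
        hB.indep n (fun i => t i) (fun i => (t i).2) fun i j hij => ht hij
    simpa only [hB.start, sub_zero, Real.toNNReal_coe] using hB.gauss 0 t le_rfl t.2
  have hpast : Measurable fun (p : Iic s.toNNReal → ℝ) (u : Icc (0 : ℝ) s) =>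
      p ⟨(u : ℝ).toNNReal, Real.toNNReal_le_toNNReal u.2.2⟩ :=
    measurable_pi_lambda _ fun u => measurable_pi_apply _
  convert (hpre.indepFun_shift s.toNNReal).symm.comp hpast
    (measurable_pi_apply (t - s).toNNReal) using 1
  · ext ω u
    simp [Real.coe_toNNReal _ u.2.1]
  · ext ω
    simp [Real.coe_toNNReal _ hs, Real.coe_toNNReal _ (sub_nonneg.2 hst)]

lemma _root_.IsStdBM.isBrownianWrt {P : Measure Ω} {B : ℝ → Ω → ℝ} (hB : IsStdBM P B) :
    IsBrownianWrt P (pastFiltration hB.measurable) B where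
  continuous := hB.cont
  adapted _ hs := measurable_pastFiltration _ hs le_rfl
  indep _ _ hs hst := (IndepFun_iff_Indep _ _ _).1 (hB.indepFun_past hs hst)
  gauss := hB.gauss

end Filtered

section Zeros

variable {Ω : Type*} {X : ℝ → Ω → ℝ} {ω : Ω}

/-- The event that the process `X` vanishes at some time of `[a, b]`. -/
def zeroEvent (X : ℝ → Ω → ℝ) (a b : ℝ) : Set Ω := {ω | ∃ u ∈ Icc a b, X u ω = 0}

/-- The first zero of `X` in `[0, 1]`, with value `0` when there is none. -/
noncomputable def firstZero (X : ℝ → Ω → ℝ) (ω : Ω) : ℝ := sInf {t ∈ Icc (0 : ℝ) 1 | X t ω = 0}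

lemma measurableSet_zeroEvent {m : MeasurableSpace Ω} {a b : ℝ}
    (hcont : ∀ ω, Continuous fun t => X t ω) (hmeas : ∀ u ∈ Icc a b, Measurable[m] (X u)) :
    MeasurableSet[m] (zeroEvent X a b) := by
  rcases lt_or_ge b a with hba | hab
  · simp [zeroEvent, Icc_eq_empty hba.not_ge]
  have approx : zeroEvent X a b =
      ⋂ n : ℕ, ⋃ q : ℚ, {ω | |X (projIcc a b hab q) ω| < 1 / ((n : ℝ) + 1)} := by
    ext ω
    simp only [zeroEvent, mem_iInter, mem_iUnion, mem_ofPred_eq]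
    constructor
    · rintro ⟨u, hu, hzero⟩ n
      have hopen : IsOpen {t : ℝ | |X (projIcc a b hab t) ω| < 1 / ((n : ℝ) + 1)} :=
        isOpen_lt ((hcont ω).comp
          (continuous_subtype_val.comp continuous_projIcc)).abs continuous_const
      refine Rat.denseRange_cast.exists_mem_open hopen ⟨u, ?_⟩
      simp only [mem_ofPred_eq, projIcc_of_mem hab hu, hzero, abs_zero]
      positivity
    · intro small
      obtain ⟨u, hu, hmin⟩ := isCompact_Icc.exists_isMinOn (nonempty_Icc.2 hab)
        ((hcont ω).abs.continuousOn (s := Icc a b))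
      refine ⟨u, hu, by_contra fun hne => ?_⟩
      obtain ⟨n, hn⟩ := exists_nat_one_div_lt (abs_pos.2 hne)
      obtain ⟨q, hq⟩ := small n
      exact (hq.trans hn).not_ge (hmin (projIcc a b hab q).2)
  rw [approx]
  exact MeasurableSet.iInter fun n => MeasurableSet.iUnion fun q =>
    (hmeas _ (projIcc a b hab q).2).abs measurableSet_Iio

lemma isCompact_zeros (hcont : Continuous fun t => X t ω) :
    IsCompact {t ∈ Icc (0 : ℝ) 1 | X t ω = 0} :=
  isCompact_Icc.inter_right (isClosed_eq hcont continuous_const)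

lemma isLeast_firstZero (hcont : Continuous fun t => X t ω) (h : ω ∈ zeroEvent X 0 1) :
    IsLeast {t ∈ Icc (0 : ℝ) 1 | X t ω = 0} (firstZero X ω) :=
  (isCompact_zeros hcont).isLeast_sInf h

lemma firstZero_nonneg (X : ℝ → Ω → ℝ) (ω : Ω) : 0 ≤ firstZero X ω :=
  Real.sInf_nonneg fun _ ht => ht.1.1

lemma firstZero_of_notMem (h : ω ∉ zeroEvent X 0 1) : firstZero X ω = 0 := by
  rw [firstZero, show {t ∈ Icc (0 : ℝ) 1 | X t ω = 0} = ∅ from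
    eq_empty_of_forall_notMem fun t ht => h ⟨t, ht⟩, Real.sInf_empty]

lemma zeroEvent_mono {a b c : ℝ} (hbc : b ≤ c) : zeroEvent X a b ⊆ zeroEvent X a c :=
  fun _ ⟨u, hu, hzero⟩ => ⟨u, ⟨hu.1, hu.2.trans hbc⟩, hzero⟩

lemma firstZero_le_iff (hcont : Continuous fun t => X t ω) (h : ω ∈ zeroEvent X 0 1) {c : ℝ}
    (hc : c ≤ 1) : firstZero X ω ≤ c ↔ ω ∈ zeroEvent X 0 c := by
  have least := isLeast_firstZero hcont h
  exact ⟨fun hle => ⟨_, ⟨least.1.1.1, hle⟩, least.1.2⟩,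
    fun ⟨u, hu, hzero⟩ => (least.2 ⟨⟨hu.1, hu.2.trans hc⟩, hzero⟩).trans hu.2⟩

lemma measurable_firstZero [MeasurableSpace Ω] (hcont : ∀ ω, Continuous fun t => X t ω)
    (hmeas : ∀ t, 0 ≤ t → Measurable (X t)) : Measurable (firstZero X) := by
  refine measurable_of_Iic fun c => ?_
  have sublevel : firstZero X ⁻¹' Iic c =
      ((zeroEvent X 0 1)ᶜ ∩ {_ω | 0 ≤ c}) ∪ zeroEvent X 0 (min c 1) := by
    ext ω
    simp only [mem_preimage, mem_Iic, mem_union, mem_inter_iff, mem_compl_iff, mem_ofPred_eq]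
    by_cases h : ω ∈ zeroEvent X 0 1
    · rw [← firstZero_le_iff (hcont ω) h (min_le_right c 1), le_min_iff,
        and_iff_left (isLeast_firstZero (hcont ω) h).1.1.2]
      tauto
    · have : ω ∉ zeroEvent X 0 (min c 1) := fun h' => h (zeroEvent_mono (min_le_right c 1) h')
      rw [firstZero_of_notMem h]
      tauto
  rw [sublevel]
  exact ((measurableSet_zeroEvent hcont fun u hu => hmeas u hu.1).compl.inter
    (MeasurableSet.const _)).union (measurableSet_zeroEvent hcont fun u hu => hmeas u hu.1)

lemma pos_of_notMem_zeroEvent {a b : ℝ} (hab : a ≤ b) (hcont : Continuous fun t => X t ω)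
    (ha : 0 < X a ω) (h : ω ∉ zeroEvent X a b) : 0 < X b ω := by
  by_contra! hb
  exact h (intermediate_value_Icc' hab hcont.continuousOn ⟨hb, ha.le⟩)

end Zeros

section Reflection

variable {Ω : Type*} [mΩ : MeasurableSpace Ω] {P : Measure Ω} {𝓕 : Filtration ℝ mΩ}
  {X : ℝ → Ω → ℝ}

lemma setLIntegral_eq_of_fiberwise {ι : Type*} [Countable ι] {κ : Ω → ι} {B : Set Ω}
    (hB : ∀ k, MeasurableSet (B ∩ κ ⁻¹' {k})) {f g : Ω → ℝ≥0∞}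
    (h : ∀ k, ∫⁻ ω in B ∩ κ ⁻¹' {k}, f ω ∂P = ∫⁻ ω in B ∩ κ ⁻¹' {k}, g ω ∂P) :
    ∫⁻ ω in B, f ω ∂P = ∫⁻ ω in B, g ω ∂P := by
  have cover : B = ⋃ k, B ∩ κ ⁻¹' {k} := by
    rw [← inter_iUnion, ← preimage_iUnion, iUnion_of_singleton, preimage_univ, inter_univ]
  have disjoint : Pairwise (Function.onFun Disjoint fun k => B ∩ κ ⁻¹' {k}) := fun i j hij =>
    ((disjoint_singleton.2 hij).preimage κ).mono inter_subset_right inter_subset_right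
  rw [cover, lintegral_iUnion hB disjoint, lintegral_iUnion hB disjoint, tsum_congr h]

namespace IsBrownianWrt

lemma measurableSet_zeroEvent (hX : IsBrownianWrt P 𝓕 X) {s t : ℝ} (hs : 0 ≤ s) :
    MeasurableSet[𝓕 t] (zeroEvent X s t) :=
  Imhof.measurableSet_zeroEvent hX.continuous fun u hu =>
    (hX.adapted u (hs.trans hu.1)).mono (𝓕.mono hu.2) le_rfl

lemma measurableSet_zeroEvent_inter_ceil (hX : IsBrownianWrt P 𝓕 X) {n k : ℕ}
    (hk : k ≤ n + 1) :
    MeasurableSet[𝓕 (k / (n + 1))]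
      (zeroEvent X 0 1 ∩ (fun ω => ⌈firstZero X ω * (n + 1)⌉₊) ⁻¹' {k}) := by
  have ceil_eq_iff {x : ℝ} (hx : 0 ≤ x) : ⌈x⌉₊ = k ↔ x ≤ k ∧ ¬ x ≤ k - 1 := by
    rcases Nat.eq_zero_or_pos k with rfl | hpos
    · simpa using fun _ => by linarith
    · rw [Nat.ceil_eq_iff hpos.ne', Nat.cast_pred hpos, not_le, and_comm]
  have hn : (0 : ℝ) < n + 1 := by positivity
  have hk' : (k : ℝ) / (n + 1) ≤ 1 := (div_le_one hn).2 (by exact_mod_cast hk)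
  have hk'' : ((k : ℝ) - 1) / (n + 1) ≤ k / (n + 1) := by gcongr; linarith
  have event_eq : zeroEvent X 0 1 ∩ (fun ω => ⌈firstZero X ω * (n + 1)⌉₊) ⁻¹' {k} =
      zeroEvent X 0 (k / (n + 1)) \ zeroEvent X 0 ((k - 1) / (n + 1)) := by
    ext ω
    by_cases h : ω ∈ zeroEvent X 0 1
    · rw [Set.mem_sdiff, ← firstZero_le_iff (hX.continuous ω) h hk',
        ← firstZero_le_iff (hX.continuous ω) h (hk''.trans hk'), le_div_iff₀ hn, le_div_iff₀ hn,
        mem_inter_iff, and_iff_right h, mem_preimage, mem_singleton_iff,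
        ceil_eq_iff (mul_nonneg (firstZero_nonneg X ω) hn.le)]
    · exact iff_of_false (fun h' => h h'.1) fun h' => h (zeroEvent_mono hk' h'.1)
  rw [event_eq]
  exact (hX.measurableSet_zeroEvent le_rfl).diff
    (𝓕.mono hk'' _ (hX.measurableSet_zeroEvent le_rfl))

variable [IsProbabilityMeasure P]

lemma setLIntegral_reflect_increment (hX : IsBrownianWrt P 𝓕 X) {s t : ℝ} (hs : 0 ≤ s)
    (hst : s ≤ t) {A : Set Ω} (hA : MeasurableSet[𝓕 s] A) {φ : ℝ → ℝ≥0∞} (hφ : Measurable φ) :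
    ∫⁻ ω in A, φ (X t ω) ∂P = ∫⁻ ω in A, φ (2 * X s ω - X t ω) ∂P := by
  have law_neg : (gaussianReal 0 (t - s).toNNReal).map (fun y => -y) =
      gaussianReal 0 (t - s).toNNReal := by rw [gaussianReal_map_neg, neg_zero]
  calc ∫⁻ ω in A, φ (X t ω) ∂P
      = ∫⁻ ω in A, ∫⁻ y, φ (X s ω + y) ∂gaussianReal 0 (t - s).toNNReal ∂P := by
        rw [← hX.setLIntegral_increment hs hst hA (f := fun p => φ (p.1 + p.2)) (by fun_prop)]
        simp only [add_sub_cancel]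
    _ = ∫⁻ ω in A, ∫⁻ y, φ (X s ω - y) ∂gaussianReal 0 (t - s).toNNReal ∂P := by
        refine lintegral_congr fun ω => ?_
        conv_lhs => rw [← law_neg]
        rw [lintegral_map (by fun_prop) measurable_neg]
        simp only [sub_eq_add_neg]
    _ = ∫⁻ ω in A, φ (2 * X s ω - X t ω) ∂P := by
        rw [← hX.setLIntegral_increment hs hst hA (f := fun p => φ (p.1 - p.2)) (by fun_prop)]
        refine lintegral_congr fun ω => ?_
        congr 1
        ring

lemma setLIntegral_reflect_at_ceil (hX : IsBrownianWrt P 𝓕 X) {A : Set Ω}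
    (hA : MeasurableSet[𝓕 0] A) {φ : ℝ → ℝ≥0∞} (hφ : Measurable φ) (n : ℕ) :
    ∫⁻ ω in A ∩ zeroEvent X 0 1, φ (X 1 ω) ∂P =
      ∫⁻ ω in A ∩ zeroEvent X 0 1,
        φ (2 * X (⌈firstZero X ω * (n + 1)⌉₊ / (n + 1)) ω - X 1 ω) ∂P := by
  have fiber (k : ℕ) : (k : ℝ) / (n + 1) ≤ 1 ∧ MeasurableSet[𝓕 (k / (n + 1))]
        (A ∩ zeroEvent X 0 1 ∩ (fun ω => ⌈firstZero X ω * (n + 1)⌉₊) ⁻¹' {k}) ∨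
      A ∩ zeroEvent X 0 1 ∩ (fun ω => ⌈firstZero X ω * (n + 1)⌉₊) ⁻¹' {k} = ∅ := by
    rcases le_or_gt k (n + 1) with hk | hk
    · rw [inter_assoc]
      exact .inl ⟨(div_le_one (by positivity)).2 (by exact_mod_cast hk),
        (𝓕.mono (by positivity) _ hA).inter (hX.measurableSet_zeroEvent_inter_ceil hk)⟩
    · refine .inr (eq_empty_of_forall_notMem fun ω ⟨⟨_, hω⟩, hceil⟩ => hk.not_ge ?_)
      rw [← (hceil : ⌈_⌉₊ = k), Nat.ceil_le]
      push_cast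
      exact mul_le_of_le_one_left (by positivity) (isLeast_firstZero (hX.continuous ω) hω).1.1.2
  refine setLIntegral_eq_of_fiberwise (κ := fun ω => ⌈firstZero X ω * (n + 1)⌉₊)
    (fun k => ?_) fun k => ?_
  · rcases fiber k with ⟨-, hmeas⟩ | hempty
    · exact 𝓕.le _ _ hmeas
    · rw [hempty]
      exact MeasurableSet.empty
  · rcases fiber k with ⟨hk, hmeas⟩ | hempty
    · rw [hX.setLIntegral_reflect_increment (by positivity) hk hmeas hφ]
      refine setLIntegral_congr_fun (𝓕.le _ _ hmeas) fun ω ⟨_, hω⟩ => ?_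
      rw [← (hω : ⌈_⌉₊ = k)]
    · simp only [hempty, Measure.restrict_empty, lintegral_zero_measure]

lemma setLIntegral_reflection_of_continuous (hX : IsBrownianWrt P 𝓕 X) {A : Set Ω}
    (hA : MeasurableSet[𝓕 0] A) (φ : BoundedContinuousFunction ℝ NNReal) :
    ∫⁻ ω in A ∩ zeroEvent X 0 1, φ (X 1 ω) ∂P =
      ∫⁻ ω in A ∩ zeroEvent X 0 1, φ (-X 1 ω) ∂P := by
  have hφ : Measurable fun x => (φ x : ℝ≥0∞) := φ.continuous.measurable.coe_nnreal_ennreal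
  have hevent : MeasurableSet (A ∩ zeroEvent X 0 1) :=
    (𝓕.le _ _ hA).inter (𝓕.le _ _ (hX.measurableSet_zeroEvent le_rfl))
  have measurable_approx (n : ℕ) :
      Measurable fun ω => X (⌈firstZero X ω * (n + 1)⌉₊ / (n + 1)) ω := by
    have hgrid : Measurable fun p : ℕ × Ω => X (p.1 / (n + 1)) p.2 :=
      measurable_from_prod_countable_right fun k =>
        hX.measurable (s := (k : ℝ) / (n + 1)) (by positivity)
    have hzero := measurable_firstZero hX.continuous fun t ht => hX.measurable ht
    exact hgrid.comp ((Nat.measurable_ceil.comp (hzero.mul_const _)).prodMk measurable_id)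
  have approx (ω : Ω) (hω : ω ∈ zeroEvent X 0 1) :
      Tendsto (fun n : ℕ => X (⌈firstZero X ω * (n + 1)⌉₊ / (n + 1)) ω) atTop (nhds 0) := by
    rw [← (isLeast_firstZero (hX.continuous ω) hω).1.2]
    refine ((hX.continuous ω).tendsto _).comp ?_
    exact_mod_cast ((tendsto_nat_ceil_mul_div_atTop (firstZero_nonneg X ω)).comp
      tendsto_natCast_atTop_atTop).comp (tendsto_add_atTop_nat 1)
  have limit := tendsto_lintegral_of_dominated_convergence (fun _ => (nndist 0 φ : ℝ≥0∞))
    (μ := P.restrict (A ∩ zeroEvent X 0 1))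
    (F := fun n ω => φ (2 * X (⌈firstZero X ω * (n + 1)⌉₊ / (n + 1)) ω - X 1 ω))
    (f := fun ω => φ (-X 1 ω))
    (fun n => hφ.comp (((measurable_approx n).const_mul 2).sub (hX.measurable zero_le_one)))
    (fun n => ae_of_all _ fun ω => ENNReal.coe_le_coe.2 (φ.apply_le_nndist_zero _))
    (by simp [ENNReal.mul_eq_top])
    ((ae_restrict_iff' hevent).2 <| ae_of_all _ fun ω hω => ENNReal.tendsto_coe.2 <|
      (φ.continuous.tendsto _).comp <| by
        simpa using ((approx ω hω.2).const_mul 2).sub_const (X 1 ω))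
  simp only [← hX.setLIntegral_reflect_at_ceil hA hφ] at limit
  exact tendsto_nhds_unique tendsto_const_nhds limit

lemma setLIntegral_reflection (hX : IsBrownianWrt P 𝓕 X) {A : Set Ω}
    (hA : MeasurableSet[𝓕 0] A) {φ : ℝ → ℝ≥0∞} (hφ : Measurable φ) :
    ∫⁻ ω in A ∩ zeroEvent X 0 1, φ (X 1 ω) ∂P =
      ∫⁻ ω in A ∩ zeroEvent X 0 1, φ (-X 1 ω) ∂P := by
  have hX1 := hX.measurable zero_le_one
  have hX1_neg : Measurable fun ω => -X 1 ω := hX1.neg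
  have law_eq : (P.restrict (A ∩ zeroEvent X 0 1)).map (X 1) =
      (P.restrict (A ∩ zeroEvent X 0 1)).map (fun ω => -X 1 ω) := by
    refine ext_of_forall_lintegral_eq_of_IsFiniteMeasure fun f => ?_
    rw [lintegral_map f.continuous.measurable.coe_nnreal_ennreal hX1,
      lintegral_map f.continuous.measurable.coe_nnreal_ennreal hX1_neg]
    exact hX.setLIntegral_reflection_of_continuous hA f
  rw [← lintegral_map hφ hX1, law_eq, lintegral_map hφ hX1_neg]

end IsBrownianWrt

end Reflection

section HTransform

lemma besselSemigroup_iSup (t : ℝ) {h : ℕ → ℝ → ℝ≥0∞} (hh : ∀ n, Measurable (h n))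
    (hmono : Monotone h) (x : ℝ) :
    besselSemigroup t (fun r => ⨆ n, h n r) x = ⨆ n, besselSemigroup t (h n) x :=
  lintegral_iSup (fun n => by have := hh n; fun_prop) fun _ _ hmn _ => hmono hmn _

section ZeroEvent

variable {Ω : Type*} {X : ℝ → Ω → ℝ}

lemma zeroEvent_neg (a b : ℝ) : zeroEvent (fun t ω => -X t ω) a b = zeroEvent X a b := by
  ext ω
  simp only [zeroEvent, neg_eq_zero]

lemma zeroEvent_rescale {s t : ℝ} (hst : s < t) :
    zeroEvent (fun u ω => X (s + (t - s) * u) ω / √(t - s)) 0 1 = zeroEvent X s t := by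
  have hpos := sub_pos.2 hst
  have image : (fun u => s + (t - s) * u) '' Icc 0 1 = Icc s t := by
    simp only [add_comm s, image_affine_Icc' hpos, mul_zero, mul_one, zero_add, sub_add_cancel]
  ext ω
  simp only [zeroEvent, ← image, mem_ofPred_eq, exists_mem_image, div_eq_zero_iff,
    (Real.sqrt_pos.2 hpos).ne', or_false]

end ZeroEvent

variable {Ω : Type*} [mΩ : MeasurableSpace Ω] {P : Measure Ω} {𝓕 : Filtration ℝ mΩ}
  {X : ℝ → Ω → ℝ}

lemma setLIntegral_ofReal_mul_iSup {A : Set Ω} {U : Ω → ℝ} (hU : Measurable U)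
    {h : ℕ → ℝ → ℝ≥0∞} (hh : ∀ n, Measurable (h n)) (hmono : Monotone h) :
    ∫⁻ ω in A, ENNReal.ofReal (U ω) * ⨆ n, h n (U ω) ∂P =
      ⨆ n, ∫⁻ ω in A, ENNReal.ofReal (U ω) * h n (U ω) ∂P := by
  simp only [ENNReal.mul_iSup]
  exact lintegral_iSup (fun n => by have := hh n; fun_prop)
    fun _ _ hmn _ => mul_le_mul_right (hmono hmn _) _

namespace IsBrownianWrt

variable [IsProbabilityMeasure P]

lemma setLIntegral_comp_one (hX : IsBrownianWrt P 𝓕 X) {A : Set Ω} (hA : MeasurableSet[𝓕 0] A)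
    {φ : ℝ → ℝ≥0∞} (hφ : Measurable φ) :
    ∫⁻ ω in A, φ (X 1 ω) ∂P = ∫⁻ ω in A, ∫⁻ a, φ a ∂gaussianReal (X 0 ω) 1 ∂P := by
  have increment := hX.setLIntegral_increment le_rfl zero_le_one hA
    (f := fun p => φ (p.1 + p.2)) (by fun_prop)
  simp only [add_sub_cancel, sub_zero, Real.toNNReal_one] at increment
  rw [increment]
  refine lintegral_congr fun ω => ?_
  rw [← lintegral_map (f := φ) (g := fun y => X 0 ω + y) hφ (by fun_prop),
    gaussianReal_map_const_add, zero_add]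

lemma setLIntegral_killed_of_bounded (hX : IsBrownianWrt P 𝓕 X) {A : Set Ω}
    (hA : MeasurableSet[𝓕 0] A) (hnonneg : ∀ ω ∈ A, 0 ≤ X 0 ω) {h : ℝ → ℝ≥0∞}
    (hh : Measurable h) {C : NNReal} (hC : ∀ r, ENNReal.ofReal r * h r ≤ C) :
    ∫⁻ ω in A \ zeroEvent X 0 1, ENNReal.ofReal (X 1 ω) * h (X 1 ω) ∂P =
      ∫⁻ ω in A, ENNReal.ofReal (X 0 ω) * besselSemigroup 1 h (X 0 ω) ∂P := by
  have hX0 := hX.measurable le_rfl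
  have hA' := 𝓕.le _ _ hA
  have hZ := 𝓕.le _ _ (hX.measurableSet_zeroEvent le_rfl (t := 1))
  let φ : ℝ → ℝ≥0∞ := fun r => ENNReal.ofReal r * h r
  have hφ : Measurable φ := by fun_prop
  have kernel : ∫⁻ ω in A, ENNReal.ofReal (X 0 ω) * besselSemigroup 1 h (X 0 ω) ∂P +
      ∫⁻ ω in A, φ (-X 1 ω) ∂P = ∫⁻ ω in A, φ (X 1 ω) ∂P := by
    have := measurable_besselSemigroup 1 hh
    rw [hX.setLIntegral_comp_one hA hφ,
      hX.setLIntegral_comp_one hA (φ := fun a => φ (-a)) (by fun_prop),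
      ← lintegral_add_left (by fun_prop)]
    exact setLIntegral_congr_fun hA' fun ω hω => ofReal_mul_besselSemigroup_one hh (hnonneg ω hω)
  have survivor_vanish : ∫⁻ ω in A \ zeroEvent X 0 1, φ (-X 1 ω) ∂P = 0 := by
    refine setLIntegral_eq_zero (hA'.diff hZ) fun ω hω => ?_
    have hne : X 0 ω ≠ 0 := fun h0 => hω.2 ⟨0, by simp, h0⟩
    have := pos_of_notMem_zeroEvent zero_le_one (hX.continuous ω)
      ((hnonneg ω hω.1).lt_of_ne' hne) hω.2
    simp only [φ, ENNReal.ofReal_of_nonpos (neg_nonpos.2 this.le), zero_mul, Pi.zero_apply]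
  have finite : ∫⁻ ω in A, φ (-X 1 ω) ∂P ≠ ∞ :=
    ne_top_of_le_ne_top (by simp [ENNReal.mul_eq_top]) (lintegral_mono fun ω => hC (-X 1 ω))
  have mirror : ∫⁻ ω in A ∩ zeroEvent X 0 1, φ (X 1 ω) ∂P = ∫⁻ ω in A, φ (-X 1 ω) ∂P := by
    rw [← lintegral_inter_add_sdiff (fun ω => φ (-X 1 ω)) A hZ, survivor_vanish, add_zero,
      hX.setLIntegral_reflection hA hφ]
  rw [← lintegral_inter_add_sdiff (fun ω => φ (X 1 ω)) A hZ, mirror, add_comm] at kernel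
  exact ((ENNReal.add_right_inj finite).1 kernel).symm

lemma setLIntegral_killed_of_nonneg (hX : IsBrownianWrt P 𝓕 X) {A : Set Ω}
    (hA : MeasurableSet[𝓕 0] A) (hnonneg : ∀ ω ∈ A, 0 ≤ X 0 ω) {h : ℝ → ℝ≥0∞}
    (hh : Measurable h) :
    ∫⁻ ω in A \ zeroEvent X 0 1, ENNReal.ofReal (X 1 ω) * h (X 1 ω) ∂P =
      ∫⁻ ω in A, ENNReal.ofReal (X 0 ω) * besselSemigroup 1 h (X 0 ω) ∂P := by
  let trunc : ℕ → ℝ → ℝ≥0∞ := fun n r => h r ⊓ (n / ENNReal.ofReal r)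
  have trunc_meas (n : ℕ) : Measurable (trunc n) := by fun_prop
  have trunc_mono : Monotone trunc := fun m n hmn r => by dsimp only [trunc]; gcongr
  have trunc_iSup : h = fun r => ⨆ n, trunc n r := by
    ext r
    simp only [trunc, ← inf_iSup_eq, ← ENNReal.iSup_div, ENNReal.iSup_natCast,
      ENNReal.top_div_of_ne_top ENNReal.ofReal_ne_top, le_top, inf_of_le_left]
  have trunc_le (n : ℕ) (r : ℝ) : ENNReal.ofReal r * trunc n r ≤ (n : NNReal) :=
    (mul_le_mul_right inf_le_right _).trans ENNReal.mul_div_le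
  rw [trunc_iSup]
  simp only [besselSemigroup_iSup 1 trunc_meas trunc_mono]
  rw [setLIntegral_ofReal_mul_iSup (hX.measurable zero_le_one) trunc_meas trunc_mono,
    setLIntegral_ofReal_mul_iSup (hX.measurable le_rfl)
      (h := fun n => besselSemigroup 1 (trunc n))
      (fun n => measurable_besselSemigroup 1 (trunc_meas n))
      fun _ _ hmn _ => lintegral_mono fun _ => trunc_mono hmn _]
  exact iSup_congr fun n => hX.setLIntegral_killed_of_bounded hA hnonneg (trunc_meas n) (trunc_le n)

lemma setLIntegral_abs_killed_of_nonneg (hX : IsBrownianWrt P 𝓕 X) {A : Set Ω}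
    (hA : MeasurableSet[𝓕 0] A) (hnonneg : ∀ ω ∈ A, 0 ≤ X 0 ω) {h : ℝ → ℝ≥0∞}
    (hh : Measurable h) :
    ∫⁻ ω in A \ zeroEvent X 0 1, ENNReal.ofReal |X 1 ω| * h |X 1 ω| ∂P =
      ∫⁻ ω in A, ENNReal.ofReal |X 0 ω| * besselSemigroup 1 h |X 0 ω| ∂P := by
  have hA' := 𝓕.le _ _ hA
  have hZ := 𝓕.le _ _ (hX.measurableSet_zeroEvent le_rfl (t := 1))
  have abs_one : ∀ ω ∈ A \ zeroEvent X 0 1, |X 1 ω| = X 1 ω := fun ω hω => by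
    have hne : X 0 ω ≠ 0 := fun h0 => hω.2 ⟨0, by simp, h0⟩
    exact abs_of_pos (pos_of_notMem_zeroEvent zero_le_one (hX.continuous ω)
      ((hnonneg ω hω.1).lt_of_ne' hne) hω.2)
  rw [setLIntegral_congr_fun (hA'.diff hZ) fun ω hω => by rw [abs_one ω hω],
    setLIntegral_congr_fun hA' fun ω hω => by rw [abs_of_nonneg (hnonneg ω hω)]]
  exact hX.setLIntegral_killed_of_nonneg hA hnonneg hh

lemma setLIntegral_killed_one (hX : IsBrownianWrt P 𝓕 X) {A : Set Ω}
    (hA : MeasurableSet[𝓕 0] A) {h : ℝ → ℝ≥0∞} (hh : Measurable h) :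
    ∫⁻ ω in A \ zeroEvent X 0 1, ENNReal.ofReal |X 1 ω| * h |X 1 ω| ∂P =
      ∫⁻ ω in A, ENNReal.ofReal |X 0 ω| * besselSemigroup 1 h |X 0 ω| ∂P := by
  let A₀ := {ω | 0 ≤ X 0 ω}
  have hA₀ : MeasurableSet[𝓕 0] A₀ := hX.adapted 0 le_rfl measurableSet_Ici
  have pos := hX.setLIntegral_abs_killed_of_nonneg (hA.inter hA₀) (fun ω hω => hω.2) hh
  have neg := hX.neg.setLIntegral_abs_killed_of_nonneg (hA.diff hA₀)
    (fun ω hω => neg_nonneg.2 (not_le.1 hω.2).le) hh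
  simp only [abs_neg, zeroEvent_neg] at neg
  rw [← lintegral_inter_add_sdiff _ A (𝓕.le _ _ hA₀), ← pos, ← neg, sdiff_right_comm,
    inter_sdiff_right_comm, lintegral_inter_add_sdiff _ _ (𝓕.le _ _ hA₀)]

/-- The `h`-transform of killed Brownian motion with `h = |·|`, over one time step. -/
lemma setLIntegral_killed (hX : IsBrownianWrt P 𝓕 X) {s t : ℝ} (hs : 0 ≤ s) (hst : s ≤ t)
    {A : Set Ω} (hA : MeasurableSet[𝓕 s] A) {h : ℝ → ℝ≥0∞} (hh : Measurable h) :
    ∫⁻ ω in A \ zeroEvent X s t, ENNReal.ofReal |X t ω| * h |X t ω| ∂P =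
      ∫⁻ ω in A, ENNReal.ofReal |X s ω| * besselSemigroup (t - s) h |X s ω| ∂P := by
  rcases hst.eq_or_lt with rfl | hlt
  · have hZ := 𝓕.le _ _ (hX.measurableSet_zeroEvent hs (t := s))
    have vanish : ∫⁻ ω in A ∩ zeroEvent X s s, ENNReal.ofReal |X s ω| * h |X s ω| ∂P = 0 := by
      refine setLIntegral_eq_zero ((𝓕.le _ _ hA).inter hZ) fun ω hω => ?_
      obtain ⟨u, hu, h0⟩ := hω.2
      obtain rfl : u = s := by simpa using hu
      simp [h0]
    simp only [sub_self, besselSemigroup_zero h (abs_nonneg _)]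
    rw [← lintegral_inter_add_sdiff _ A hZ, vanish, zero_add]
  · have hpos := sub_pos.2 hlt
    have hc := Real.sqrt_pos.2 hpos
    have hA' : MeasurableSet[𝓕 (s + (t - s) * 0)] A := by rwa [mul_zero, add_zero]
    have unit := (hX.rescale hs hpos).setLIntegral_killed_one hA'
      (h := fun r => h (√(t - s) * r)) (by fun_prop)
    have scale (a : ℝ) : √(t - s) * (|a| / √(t - s)) = |a| := by field
    have weight (a : ℝ) (q : ℝ≥0∞) : ENNReal.ofReal (|a| / √(t - s)) * q =
        (ENNReal.ofReal √(t - s))⁻¹ * (ENNReal.ofReal |a| * q) := by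
      rw [ENNReal.ofReal_div_of_pos hc, ENNReal.div_eq_inv_mul, mul_assoc]
    have hinv : (ENNReal.ofReal √(t - s))⁻¹ ≠ ∞ := ENNReal.inv_ne_top.2 (by simpa using hpos)
    simp only [zeroEvent_rescale hlt, mul_one, mul_zero, add_zero, add_sub_cancel, abs_div,
      abs_of_pos hc, scale, ← besselSemigroup_eq_one hpos, weight,
      lintegral_const_mul' _ _ hinv] at unit
    exact (ENNReal.mul_right_inj (ENNReal.inv_ne_zero.2 ENNReal.ofReal_ne_top) hinv).1 unit

end IsBrownianWrt

end HTransform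

section BesselMarkov

variable {Ω : Type*} [MeasurableSpace Ω] {P : Measure Ω} {d : ℕ}
  {B : ℝ → Ω → EuclideanSpace ℝ (Fin d)}

lemma _root_.IsStdBMVec.measurable (hB : IsStdBMVec d P B) (t : ℝ) : Measurable (B t) :=
  (WithLp.measurable_toLp 2 _).comp (measurable_pi_lambda _ fun i => (hB.coord i).measurable t)

lemma _root_.IsStdBMVec.start (hB : IsStdBMVec d P B) (ω : Ω) : B 0 ω = 0 := by
  ext i
  exact (hB.coord i).start ω

variable [IsProbabilityMeasure P]

lemma _root_.IsStdBMVec.indep_past (hB : IsStdBMVec d P B) {s t : ℝ} (hs : 0 ≤ s) (hst : s ≤ t) :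
    Indep (pastFiltration hB.measurable s)
      (MeasurableSpace.comap (fun ω => B t ω - B s ω) inferInstance) P := by
  have coords := indepFun_pi_of_iIndepFun_prodMk
    (U := fun i ω (u : Icc (0 : ℝ) s) => B u ω i) (V := fun i ω => B t ω i - B s ω i)
    (fun i => measurable_pi_lambda _ fun u => (hB.coord i).measurable u)
    (fun i => ((hB.coord i).measurable t).sub ((hB.coord i).measurable s))
    (hB.indepCoord.comp (fun _ p => (fun u : Icc (0 : ℝ) s => p u, p t - p s))
      fun _ => by fun_prop)
    fun i => (hB.coord i).indepFun_past hs hst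
  refine (IndepFun_iff_Indep _ _ _).1 (coords.comp (φ := fun p u => WithLp.toLp 2 fun i => p i u)
    (measurable_pi_lambda _ fun u => (WithLp.measurable_toLp 2 _).comp (by fun_prop))
    (WithLp.measurable_toLp 2 _))

lemma _root_.IsStdBMVec.map_increment (hB : IsStdBMVec d P B) {s t : ℝ} (hs : 0 ≤ s)
    (hst : s ≤ t) :
    P.map (fun ω => B t ω - B s ω) =
      (stdGaussian (EuclideanSpace ℝ (Fin d))).map (fun z => √(t - s) • z) := by
  have hmeas (i : Fin d) : Measurable fun ω => B t ω i - B s ω i :=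
    ((hB.coord i).measurable t).sub ((hB.coord i).measurable s)
  have indep : iIndepFun (fun i ω => B t ω i - B s ω i) P :=
    hB.indepCoord.comp (fun _ p => p t - p s) fun _ => by fun_prop
  have law_coord (i : Fin d) : P.map (fun ω => B t ω i - B s ω i) =
      (gaussianReal 0 1).map (fun y => √(t - s) * y) := by
    rw [(hB.coord i).gauss s t hs hst, gaussianReal_map_const_mul, mul_zero]
    congr 1
    ext
    simp [Real.sq_sqrt (sub_nonneg.2 hst), sub_nonneg.2 hst]
  have (_ : Fin d) : IsProbabilityMeasure ((gaussianReal 0 1).map (fun y => √(t - s) * y)) :=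
    Measure.isProbabilityMeasure_map (by fun_prop)
  have law_pi : P.map (fun ω i => B t ω i - B s ω i) =
      (Measure.pi fun _ => gaussianReal 0 1).map fun z (i : Fin d) => √(t - s) * z i := by
    rw [(iIndepFun_iff_map_fun_eq_pi_map fun i => (hmeas i).aemeasurable).1 indep]
    simp only [law_coord]
    exact (Measure.pi_map_pi fun _ => by fun_prop).symm
  have := congrArg (Measure.map (WithLp.toLp 2)) law_pi
  rw [Measure.map_map (by fun_prop) (measurable_pi_lambda _ hmeas),
    Measure.map_map (by fun_prop) (by fun_prop)] at this
  rw [← map_pi_eq_stdGaussian, Measure.map_map (by fun_prop) (by fun_prop)]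
  exact this

lemma _root_.IsStdBMVec.lintegral_mul_norm {β : ℝ → Ω → EuclideanSpace ℝ (Fin 3)}
    (hβ : IsStdBMVec 3 P β) {s t : ℝ} (hs : 0 ≤ s) (hst : s ≤ t) {Y : Ω → ℝ≥0∞}
    (hY : Measurable[pastFiltration hβ.measurable s] Y) {h : ℝ → ℝ≥0∞} (hh : Measurable h)
    (v : EuclideanSpace ℝ (Fin 3)) :
    ∫⁻ ω, Y ω * h ‖v + β t ω‖ ∂P = ∫⁻ ω, Y ω * besselSemigroup (t - s) h ‖v + β s ω‖ ∂P := by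
  have hincr : Measurable fun ω => β t ω - β s ω := (hβ.measurable t).sub (hβ.measurable s)
  have markov := lintegral_comp_prodMk_of_indep ((pastFiltration hβ.measurable).le s)
    (hY.prodMk (measurable_pastFiltration hβ.measurable hs le_rfl)) hincr
    (hβ.indep_past hs hst) (f := fun p => p.1.1 * h ‖v + p.1.2 + p.2‖) (by fun_prop)
  simp only [add_assoc, add_sub_cancel] at markov
  rw [markov, hβ.map_increment hs hst]
  refine lintegral_congr fun ω => ?_
  rw [lintegral_const_mul _ (by fun_prop), lintegral_map (by fun_prop) (by fun_prop),
    besselSemigroup_norm]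
  simp only [add_assoc]

lemma _root_.IsStdBMVec.lintegral_norm {β : ℝ → Ω → EuclideanSpace ℝ (Fin 3)}
    (hβ : IsStdBMVec 3 P β) {t : ℝ} (ht : 0 ≤ t) {h : ℝ → ℝ≥0∞} (hh : Measurable h)
    (v : EuclideanSpace ℝ (Fin 3)) : ∫⁻ ω, h ‖v + β t ω‖ ∂P = besselSemigroup t h ‖v‖ := by
  simpa only [Pi.one_apply, one_mul, hβ.start, add_zero, sub_zero, lintegral_const, measure_univ,
    mul_one] using hβ.lintegral_mul_norm le_rfl ht measurable_const hh v (Y := 1)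

end BesselMarkov

section KilledPaths

lemma zeroEvent_union {Ω : Type*} {X : ℝ → Ω → ℝ} {a b c : ℝ} (hab : a ≤ b) (hbc : b ≤ c) :
    zeroEvent X a b ∪ zeroEvent X b c = zeroEvent X a c := by
  ext ω
  simp only [zeroEvent, mem_union, mem_ofPred_eq, ← Icc_union_Icc_eq_Icc hab hbc, or_and_right,
    exists_or]

variable {Ω : Type*} [mΩ : MeasurableSpace Ω] {P : Measure Ω} [IsProbabilityMeasure P]
  {𝓕 : Filtration ℝ mΩ} {X : ℝ → Ω → ℝ}

lemma IsBrownianWrt.setLIntegral_mul_killed (hX : IsBrownianWrt P 𝓕 X) {s t : ℝ} (hs : 0 ≤ s)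
    (hst : s ≤ t) {A : Set Ω} (hA : MeasurableSet[𝓕 s] A) {Y : Ω → ℝ≥0∞} (hY : Measurable[𝓕 s] Y)
    {h : ℝ → ℝ≥0∞} (hh : Measurable h) :
    ∫⁻ ω in A \ zeroEvent X s t, Y ω * (ENNReal.ofReal |X t ω| * h |X t ω|) ∂P =
      ∫⁻ ω in A, Y ω * (ENNReal.ofReal |X s ω| * besselSemigroup (t - s) h |X s ω|) ∂P := by
  have hA' := 𝓕.le _ _ hA
  have hZ := 𝓕.le _ _ (hX.measurableSet_zeroEvent hs (t := t))
  have hXs := hX.measurable hs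
  have hXt := hX.measurable (hs.trans hst)
  have := measurable_besselSemigroup (t - s) hh
  rw [← lintegral_indicator (hA'.diff hZ), ← lintegral_indicator hA']
  simp only [indicator_mul_right _ Y]
  refine lintegral_mul_eq_of_setLIntegral_eq (𝓕.le s) (Measurable.indicator (by fun_prop)
    (hA'.diff hZ)) (Measurable.indicator (by fun_prop) hA') hY fun A₁ hA₁ => ?_
  rw [setLIntegral_indicator (hA'.diff hZ), setLIntegral_indicator hA',
    inter_comm, inter_comm A, ← inter_sdiff_assoc]
  exact hX.setLIntegral_killed hs hst (hA₁.inter hA) hh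

variable {Ω' : Type*} [MeasurableSpace Ω'] {Q : Measure Ω'} [IsProbabilityMeasure Q]
  {β : ℝ → Ω' → EuclideanSpace ℝ (Fin 3)}

lemma IsBrownianWrt.setLIntegral_prod_mul_killed (hX : IsBrownianWrt P 𝓕 X)
    (hβ : IsStdBMVec 3 Q β) {A : Set Ω} (hA : MeasurableSet[𝓕 0] A) {ι : Type*} [LinearOrder ι]
    {τ : ι → ℝ} (hτ : StrictMono τ) (hτ0 : ∀ i, 0 ≤ τ i) {g : ι → ℝ → ℝ≥0∞}
    (hg : ∀ i, Measurable (g i)) (J : Finset ι) {t : ℝ} (ht : 0 ≤ t) (hJ : ∀ i ∈ J, τ i ≤ t)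
    {h : ℝ → ℝ≥0∞} (hh : Measurable h) :
    ∫⁻ ω in A \ zeroEvent X 0 t,
        (∏ i ∈ J, g i |X (τ i) ω|) * (ENNReal.ofReal |X t ω| * h |X t ω|) ∂P =
      ∫⁻ ω in A, ENNReal.ofReal |X 0 ω| * (∫⁻ ω',
        (∏ i ∈ J, g i ‖|X 0 ω| • axis + β (τ i) ω'‖) * h ‖|X 0 ω| • axis + β t ω'‖ ∂Q) ∂P := by
  induction J using Finset.induction_on_max generalizing t h with
  | empty =>
    have norm_start (x : ℝ) : ‖|x| • axis‖ = |x| := by simp [norm_smul, norm_axis]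
    simp only [Finset.prod_empty, one_mul, hβ.lintegral_norm ht hh, norm_start]
    simpa only [sub_zero] using hX.setLIntegral_killed le_rfl ht hA hh
  | insert a J hlt ih =>
    have ha := hτ0 a
    have hat := hJ a (Finset.mem_insert_self a J)
    have hle : ∀ i ∈ insert a J, τ i ≤ τ a := by
      simpa using fun i hi => (hτ (hlt i hi)).le
    have adapted : Measurable[𝓕 (τ a)] fun ω => ∏ i ∈ insert a J, g i |X (τ i) ω| :=
      Finset.measurable_fun_prod _ fun i hi => (hg i).comp (measurable_abs.comp
        ((hX.adapted _ (hτ0 i)).mono (𝓕.mono (hle i hi)) le_rfl))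
    have adapted_bessel (v : EuclideanSpace ℝ (Fin 3)) :
        Measurable[pastFiltration hβ.measurable (τ a)]
          fun ω => ∏ i ∈ insert a J, g i ‖v + β (τ i) ω‖ :=
      Finset.measurable_fun_prod _ fun i hi => (hg i).comp (measurable_norm.comp
        ((measurable_pastFiltration hβ.measurable (hτ0 i) (hle i hi)).const_add v))
    have := measurable_besselSemigroup (t - τ a) hh
    have hA_past := (𝓕.mono ha _ hA).diff (hX.measurableSet_zeroEvent le_rfl (t := τ a))
    have hga := hg a
    have hnot : a ∉ J := fun h => (hlt a h).false
    simp only [hβ.lintegral_mul_norm ha hat (adapted_bessel _) hh]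
    rw [← zeroEvent_union ha hat, ← sdiff_sdiff,
      hX.setLIntegral_mul_killed ha hat hA_past adapted hh]
    simpa only [Finset.prod_insert hnot, mul_comm (g a _), mul_left_comm (g a _), mul_assoc]
      using ih ha (fun i hi => (hτ (hlt i hi)).le)
        (h := fun r => g a r * besselSemigroup (t - τ a) h r) (by fun_prop)

/-- The path `s ↦ ‖x • axis + β s‖` on `[0, 1]`: the Bessel process driven by `β`, started at
radius `|x|`. -/
noncomputable def besselPath (β : ℝ → Ω' → EuclideanSpace ℝ (Fin 3)) (x : ℝ) (ω : Ω') :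
    Icc (0 : ℝ) 1 → ℝ :=
  fun s => ‖x • axis + β s ω‖

/-- The expectation of `F R / R 1` for the Bessel process `R` started at radius `|x|`. -/
noncomputable def besselExpectation (Q : Measure Ω') (β : ℝ → Ω' → EuclideanSpace ℝ (Fin 3))
    (F : (Icc (0 : ℝ) 1 → ℝ) → ℝ≥0∞) (x : ℝ) : ℝ≥0∞ :=
  ∫⁻ ω, ENNReal.ofReal (besselPath β x ω 1)⁻¹ * F (besselPath β x ω) ∂Q

lemma measurable_besselPath (hβ : ∀ t, Measurable (β t)) {S : Type*} [MeasurableSpace S]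
    {x : S → ℝ} (hx : Measurable x) {ω : S → Ω'} (hω : Measurable ω) :
    Measurable fun p => besselPath β (x p) (ω p) :=
  measurable_pi_lambda _ fun s => by
    have := hβ s
    dsimp only [besselPath]
    fun_prop

lemma measure_ext_of_lintegral_prod {ι E : Type*} [MeasurableSpace E] {μ ν : Measure (ι → E)}
    [IsFiniteMeasure μ] (h : ∀ (J : Finset ι) (g : ι → E → ℝ≥0∞), (∀ i, Measurable (g i)) →
      ∫⁻ p, ∏ i ∈ J, g i (p i) ∂μ = ∫⁻ p, ∏ i ∈ J, g i (p i) ∂ν) : μ = ν := by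
  have cylinders : ∀ S ∈ squareCylinders fun _ : ι => {s : Set E | MeasurableSet s},
      μ S = ν S := by
    rintro S ⟨J, t, ht, rfl⟩
    have ht' (i : ι) : MeasurableSet (t i) := ht i (mem_univ i)
    have prod_indicator (p : ι → E) : ∏ i ∈ J, (t i).indicator 1 (p i) =
        ((J : Set ι).pi t).indicator (1 : (ι → E) → ℝ≥0∞) p := by
      classical
      simp only [Set.indicator_apply, Pi.one_apply, Finset.prod_ite_zero, Finset.prod_const_one]
      exact if_congr Iff.rfl rfl rfl
    have hS : MeasurableSet ((J : Set ι).pi t) :=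
      MeasurableSet.pi J.countable_toSet fun i _ => ht' i
    simpa only [prod_indicator, lintegral_indicator_one hS] using
      h J (fun i => (t i).indicator 1) fun i => measurable_one.indicator (ht' i)
  exact ext_of_generate_finite _ generateFrom_squareCylinders.symm
    (isPiSystem_squareCylinders (fun _ => MeasurableSpace.isPiSystem_measurableSet) (by simp))
    cylinders (cylinders univ ⟨∅, fun _ => univ, by simp, by simp⟩)

lemma exists_measure_lintegral_besselExpectation (hβ : ∀ t, Measurable (β t)) (μ : Measure Ω)
    {U : Ω → ℝ} (hU : Measurable U) :
    ∃ ν : Measure (Icc (0 : ℝ) 1 → ℝ), ∀ F, Measurable F →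
      ∫⁻ p, F p ∂ν = ∫⁻ ω, ENNReal.ofReal (U ω) * besselExpectation Q β F (U ω) ∂μ := by
  let ρ : Ω × Ω' → ℝ≥0∞ :=
    fun p => ENNReal.ofReal (U p.1) * ENNReal.ofReal (besselPath β (U p.1) p.2 1)⁻¹
  have hpath : Measurable fun p : Ω × Ω' => besselPath β (U p.1) p.2 :=
    measurable_besselPath hβ (hU.comp measurable_fst) measurable_snd
  have hend : Measurable fun p : Ω × Ω' => besselPath β (U p.1) p.2 1 :=
    (measurable_pi_apply 1).comp hpath
  have hρ : Measurable ρ := (hU.comp measurable_fst).ennreal_ofReal.mul hend.inv.ennreal_ofReal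
  refine ⟨((μ.prod Q).withDensity ρ).map fun p => besselPath β (U p.1) p.2, fun F hF => ?_⟩
  have hFpath : Measurable fun p : Ω × Ω' => F (besselPath β (U p.1) p.2) := hF.comp hpath
  rw [lintegral_map hF hpath, lintegral_withDensity_eq_lintegral_mul _ hρ hFpath,
    lintegral_prod _ (hρ.mul hFpath).aemeasurable]
  simp only [besselExpectation, Pi.mul_apply, ρ, mul_assoc,
    lintegral_const_mul' _ _ ENNReal.ofReal_ne_top]

lemma IsBrownianWrt.setLIntegral_killed_path (hX : IsBrownianWrt P 𝓕 X) (hβ : IsStdBMVec 3 Q β)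
    {A : Set Ω} (hA : MeasurableSet[𝓕 0] A) {F : (Icc (0 : ℝ) 1 → ℝ) → ℝ≥0∞}
    (hF : Measurable F) :
    ∫⁻ ω in A \ zeroEvent X 0 1, F (fun s => |X s ω|) ∂P =
      ∫⁻ ω in A, ENNReal.ofReal |X 0 ω| * besselExpectation Q β F |X 0 ω| ∂P := by
  have hpath : Measurable fun ω (s : Icc (0 : ℝ) 1) => |X s ω| :=
    measurable_pi_lambda _ fun s => (hX.measurable s.2.1).abs
  have hdiff := (𝓕.le _ _ hA).diff (𝓕.le _ _ (hX.measurableSet_zeroEvent le_rfl (t := 1)))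
  obtain ⟨ν, hν⟩ := exists_measure_lintegral_besselExpectation (Q := Q) hβ.measurable
    (P.restrict A) (hX.measurable le_rfl).abs
  suffices (P.restrict (A \ zeroEvent X 0 1)).map (fun ω (s : Icc (0 : ℝ) 1) => |X s ω|) = ν by
    rw [← hν F hF, ← this, lintegral_map hF hpath]
  refine measure_ext_of_lintegral_prod fun J g hg => ?_
  have hprod : Measurable fun p : Icc (0 : ℝ) 1 → ℝ => ∏ s ∈ J, g s (p s) :=
    Finset.measurable_fun_prod _ fun s _ => (hg s).comp (measurable_pi_apply s)
  have cancel : ∀ ω ∈ A \ zeroEvent X 0 1,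
      ENNReal.ofReal |X 1 ω| * ENNReal.ofReal |X 1 ω|⁻¹ = 1 := fun ω hω => by
    have : X 1 ω ≠ 0 := fun h0 => hω.2 ⟨1, by simp, h0⟩
    rw [← ENNReal.ofReal_mul (abs_nonneg _), mul_inv_cancel₀ (abs_ne_zero.2 this),
      ENNReal.ofReal_one]
  rw [lintegral_map hprod hpath, hν _ hprod]
  have htransform := hX.setLIntegral_prod_mul_killed hβ hA (Subtype.strictMono_coe (Icc (0 : ℝ) 1))
    (fun s => s.2.1) hg J zero_le_one (fun s _ => s.2.2) (h := fun r => ENNReal.ofReal r⁻¹)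
    (by fun_prop)
  rw [setLIntegral_congr_fun hdiff fun ω hω => by rw [cancel ω hω, mul_one]] at htransform
  rw [htransform]
  simp only [besselExpectation, besselPath, mul_comm (ENNReal.ofReal _⁻¹)]
  rfl

end KilledPaths

section LastZero

open scoped Topology

section Pathwise

variable {Ω : Type*} {W : ℝ → Ω → ℝ} {ω : Ω}

lemma isGreatest_lastZero (hcont : Continuous fun t => W t ω) (h : ω ∈ zeroEvent W 0 1) :
    IsGreatest {t ∈ Icc (0 : ℝ) 1 | W t ω = 0} (lastZero W ω) :=
  (isCompact_zeros hcont).isGreatest_sSup h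

/-- The modulus of `W` on `[a, 1]`, rescaled to `[0, 1]` by Brownian scaling. The meander is the
case `a = lastZero W ω`. -/
noncomputable def meanderPath (W : ℝ → Ω → ℝ) (a : ℝ) (ω : Ω) : Icc (0 : ℝ) 1 → ℝ :=
  fun s => |W (a + (1 - a) * s) ω| / √(1 - a)

lemma tendsto_meanderPath (hcont : Continuous fun t => W t ω) {a : ℝ} (ha : a < 1) :
    Tendsto (fun b => meanderPath W b ω) (𝓝 a) (𝓝 (meanderPath W a ω)) := by
  refine tendsto_pi_nhds.2 fun s => ContinuousAt.tendsto (ContinuousAt.div ?_ (by fun_prop)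
    (Real.sqrt_pos.2 (sub_pos.2 ha)).ne')
  exact (hcont.comp (by fun_prop : Continuous fun b : ℝ => b + (1 - b) * s)).abs.continuousAt

/-- The right end of the `j`-th cell of the grid of mesh `1 / (N + 1)`. -/
noncomputable def cellEnd (N j : ℕ) : ℝ := (j + 1) / (N + 1)

/-- For `j < N`, the event that the last zero of `W` lies in the `j`-th cell
`[j / (N + 1), cellEnd N j)` of the grid of mesh `1 / (N + 1)`. -/
def lastZeroCell (W : ℝ → Ω → ℝ) (N j : ℕ) : Set Ω :=
  zeroEvent W (j / (N + 1)) (cellEnd N j) \ zeroEvent W (cellEnd N j) 1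

lemma cellEnd_pos (N j : ℕ) : 0 < cellEnd N j := by
  unfold cellEnd
  positivity

lemma cellEnd_lt_one_iff {N j : ℕ} : cellEnd N j < 1 ↔ j < N := by
  rw [cellEnd, div_lt_one (by positivity), add_lt_add_iff_right, Nat.cast_lt]

lemma tendsto_cellEnd_floor {g : ℝ} (hg : 0 ≤ g) :
    Tendsto (fun N : ℕ => cellEnd N ⌊g * (N + 1)⌋₊) atTop (𝓝 g) := by
  have upper : Tendsto (fun N : ℕ => g + 1 / ((N : ℝ) + 1)) atTop (𝓝 g) := by
    simpa using tendsto_one_div_add_atTop_nhds_zero_nat.const_add g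
  refine tendsto_of_tendsto_of_tendsto_of_le_of_le tendsto_const_nhds upper (fun N => ?_)
    fun N => ?_
  · exact (le_div_iff₀ (by positivity)).2 (Nat.lt_floor_add_one _).le
  · have hN : (0 : ℝ) < N + 1 := by positivity
    dsimp only [cellEnd]
    rw [div_le_iff₀ hN, add_mul, one_div_mul_cancel hN.ne']
    gcongr
    exact Nat.floor_le (by positivity)

lemma mem_lastZeroCell_iff (hg : IsGreatest {t ∈ Icc (0 : ℝ) 1 | W t ω = 0} (lastZero W ω))
    {N j : ℕ} (h : j < N) : ω ∈ lastZeroCell W N j ↔ ⌊lastZero W ω * (N + 1)⌋₊ = j := by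
  obtain ⟨⟨⟨hg0, hg1⟩, hzero⟩, hmax⟩ := hg
  have hN : (0 : ℝ) < N + 1 := by positivity
  have hj : (0 : ℝ) ≤ j / (N + 1) := by positivity
  have hend := cellEnd_lt_one_iff.2 h
  rw [Nat.floor_eq_iff (mul_nonneg hg0 hN.le), ← div_le_iff₀ hN, ← lt_div_iff₀ hN]
  constructor
  · rintro ⟨⟨u, hu, hWu⟩, hnot⟩
    refine ⟨hu.1.trans (hmax ⟨⟨hj.trans hu.1, hu.2.trans hend.le⟩, hWu⟩), ?_⟩
    exact lt_of_not_ge fun hge => hnot ⟨_, ⟨hge, hg1⟩, hzero⟩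
  · rintro ⟨hle, hlt⟩
    refine ⟨⟨_, ⟨hle, hlt.le⟩, hzero⟩, fun ⟨u, hu, hWu⟩ => ?_⟩
    exact (hlt.trans_le hu.1).not_ge (hmax ⟨⟨(cellEnd_pos N j).le.trans hu.1, hu.2⟩, hWu⟩)

lemma sum_indicator_lastZeroCell
    (hg : IsGreatest {t ∈ Icc (0 : ℝ) 1 | W t ω = 0} (lastZero W ω)) {E : Type*} [AddCommMonoid E]
    (φ : ℕ → Ω → E) (N : ℕ) :
    ∑ j ∈ Finset.range N, (lastZeroCell W N j).indicator (φ j) ω =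
      if ⌊lastZero W ω * (N + 1)⌋₊ < N then φ ⌊lastZero W ω * (N + 1)⌋₊ ω else 0 := by
  classical
  rw [Finset.sum_congr rfl fun j hj => by
      rw [indicator_apply, if_congr (mem_lastZeroCell_iff hg (Finset.mem_range.1 hj)) rfl rfl],
    Finset.sum_ite_eq]
  simp only [Finset.mem_range]

lemma tendsto_sum_indicator_lastZeroCell
    (hg : IsGreatest {t ∈ Icc (0 : ℝ) 1 | W t ω = 0} (lastZero W ω)) (hg1 : lastZero W ω < 1)
    {E : Type*} [AddCommMonoid E] [TopologicalSpace E] (φ : ℝ → Ω → E) {y : E}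
    (hφ : Tendsto (fun a => φ a ω) (𝓝 (lastZero W ω)) (𝓝 y)) :
    Tendsto (fun N => ∑ j ∈ Finset.range N,
      (lastZeroCell W N j).indicator (φ (cellEnd N j)) ω) atTop (𝓝 y) := by
  have hend := tendsto_cellEnd_floor hg.1.1.1
  refine (hφ.comp hend).congr' ?_
  filter_upwards [hend.eventually_lt_const hg1] with N hN
  rw [sum_indicator_lastZeroCell hg fun j => φ (cellEnd N j), if_pos (cellEnd_lt_one_iff.1 hN),
    Function.comp_apply]

end Pathwise

variable {Ω : Type*} [MeasurableSpace Ω] {P : Measure Ω} {W : ℝ → Ω → ℝ}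

lemma _root_.IsStdBM.isGreatest_lastZero (hW : IsStdBM P W) (ω : Ω) :
    IsGreatest {t ∈ Icc (0 : ℝ) 1 | W t ω = 0} (lastZero W ω) :=
  Imhof.isGreatest_lastZero (hW.cont ω) ⟨0, by simp, hW.start ω⟩

lemma _root_.IsStdBM.measurableSet_zeroEvent (hW : IsStdBM P W) (a b : ℝ) :
    MeasurableSet (zeroEvent W a b) :=
  Imhof.measurableSet_zeroEvent hW.cont fun u _ => hW.measurable u

lemma _root_.IsStdBM.measurableSet_lastZeroCell (hW : IsStdBM P W) (N j : ℕ) :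
    MeasurableSet (lastZeroCell W N j) :=
  (hW.measurableSet_zeroEvent _ _).diff (hW.measurableSet_zeroEvent _ _)

lemma _root_.IsStdBM.measurable_lastZero (hW : IsStdBM P W) : Measurable (lastZero W) := by
  refine measurable_of_Ici fun c => ?_
  have superlevel : lastZero W ⁻¹' Ici c = zeroEvent W (max c 0) 1 := by
    ext ω
    obtain ⟨⟨⟨hg0, hg1⟩, hzero⟩, hmax⟩ := hW.isGreatest_lastZero ω
    refine ⟨fun hc => ⟨_, ⟨max_le hc hg0, hg1⟩, hzero⟩, fun ⟨u, hu, hWu⟩ => ?_⟩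
    obtain ⟨hcu, hu0⟩ := max_le_iff.1 hu.1
    exact hcu.trans (hmax ⟨⟨hu0, hu.2⟩, hWu⟩)
  rw [superlevel]
  exact hW.measurableSet_zeroEvent _ _

lemma _root_.IsStdBM.measurable_meanderPath (hW : IsStdBM P W) {a : Ω → ℝ} (ha : Measurable a) :
    Measurable fun ω => meanderPath W (a ω) ω := by
  have joint : Measurable (Function.uncurry W) :=
    measurable_uncurry_of_continuous_of_measurable hW.cont hW.measurable
  refine measurable_pi_lambda _ fun s => Measurable.div (Measurable.abs ?_) (by fun_prop)
  exact joint.comp (f := fun ω => (a ω + (1 - a ω) * s, ω)) (by fun_prop)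

lemma _root_.IsStdBM.ae_lastZero_lt_one (hW : IsStdBM P W) : ∀ᵐ ω ∂P, lastZero W ω < 1 := by
  have law := hW.gauss 0 1 le_rfl zero_le_one
  simp only [hW.start, sub_zero] at law
  have := nullSingletonClass_gaussianReal (μ := 0) (v := Real.toNNReal 1) (by simp)
  have null : P.map (W 1) {0} = 0 := law ▸ measure_singleton 0
  rw [Measure.map_apply (hW.measurable 1) (measurableSet_singleton 0)] at null
  refine measure_mono_null (fun ω hω => ?_) null
  obtain ⟨⟨⟨-, hg1⟩, hzero⟩, -⟩ := hW.isGreatest_lastZero ω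
  rwa [le_antisymm hg1 (not_lt.1 hω)] at hzero

lemma _root_.IsStdBM.tendsto_sum_setLIntegral_lastZeroCell [IsFiniteMeasure P] (hW : IsStdBM P W)
    {φ : ℝ → Ω → ℝ≥0∞} (hφ : ∀ a, Measurable (φ a)) {C : ℝ≥0∞} (hC : C ≠ ∞)
    (hφC : ∀ a ω, φ a ω ≤ C) {y : Ω → ℝ≥0∞}
    (hy : ∀ ω, lastZero W ω < 1 → Tendsto (fun a => φ a ω) (𝓝 (lastZero W ω)) (𝓝 (y ω))) :
    Tendsto (fun N => ∑ j ∈ Finset.range N, ∫⁻ ω in lastZeroCell W N j, φ (cellEnd N j) ω ∂P)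
      atTop (𝓝 (∫⁻ ω, y ω ∂P)) := by
  have hmeas (N j : ℕ) : Measurable ((lastZeroCell W N j).indicator (φ (cellEnd N j))) :=
    (hφ _).indicator (hW.measurableSet_lastZeroCell N j)
  have bound (N : ℕ) (ω : Ω) :
      ∑ j ∈ Finset.range N, (lastZeroCell W N j).indicator (φ (cellEnd N j)) ω ≤ C := by
    rw [sum_indicator_lastZeroCell (hW.isGreatest_lastZero ω) fun j => φ (cellEnd N j)]
    split_ifs
    exacts [hφC _ _, zero_le]
  have limit := tendsto_lintegral_of_dominated_convergence (μ := P) (fun _ => C)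
    (fun N => Finset.measurable_fun_sum (Finset.range N) fun j _ => hmeas N j)
    (fun N => Eventually.of_forall (bound N)) (by simpa using ENNReal.mul_ne_top hC (by simp))
    (hW.ae_lastZero_lt_one.mono fun ω hω => tendsto_sum_indicator_lastZeroCell
      (hW.isGreatest_lastZero ω) hω φ (hy ω hω))
  refine limit.congr fun N => ?_
  rw [lintegral_finsetSum _ fun j _ => hmeas N j]
  exact Finset.sum_congr rfl fun j _ => lintegral_indicator (hW.measurableSet_lastZeroCell N j) _

end LastZero

section Conclusion

open scoped Topology NNReal BoundedContinuousFunction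

section BesselFromZero

variable {Ω' : Type*} {β : ℝ → Ω' → EuclideanSpace ℝ (Fin 3)}

lemma continuous_besselPath (ω : Ω') : Continuous fun x => besselPath β x ω :=
  continuous_pi fun s => by
    dsimp only [besselPath]
    fun_prop

variable [MeasurableSpace Ω'] {Q : Measure Ω'}

lemma lowerSemicontinuous_besselExpectation (hβ : ∀ t, Measurable (β t))
    {f : (Icc (0 : ℝ) 1 → ℝ) → ℝ≥0} (hf : Continuous f) (hfm : Measurable f) :
    LowerSemicontinuous (besselExpectation Q β fun p => f p) := by
  intro x l hl
  have hpath (y : ℝ) : Measurable (besselPath β y) :=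
    measurable_besselPath hβ measurable_const measurable_id
  have hmeas (y : ℝ) : Measurable fun ω =>
      ENNReal.ofReal (besselPath β y ω 1)⁻¹ * (f (besselPath β y ω) : ℝ≥0∞) :=
    ((measurable_pi_apply 1).comp (hpath y)).inv.ennreal_ofReal.mul
      (hfm.comp (hpath y)).coe_nnreal_ennreal
  refine eventually_lt_of_lt_liminf (hl.trans_le ?_)
  refine (lintegral_mono fun ω => ?_).trans (lintegral_liminf_le hmeas)
  have hcont := (continuous_besselPath (β := β) ω).tendsto x
  by_cases h0 : besselPath β x ω 1 = 0
  · simp [h0]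
  · refine (ENNReal.Tendsto.mul (ENNReal.tendsto_ofReal ((tendsto_pi_nhds.1 hcont 1).inv₀ h0))
      (Or.inr ENNReal.coe_ne_top) (ENNReal.tendsto_coe.2 ((hf.tendsto _).comp hcont))
      (Or.inr ENNReal.ofReal_ne_top)).liminf_eq.ge

/-- The law of the three-dimensional Bessel process `R` reweighted by `√(π / 2) / R 1`. -/
noncomputable def reweightedBesselLaw (Q : Measure Ω') (β : ℝ → Ω' → EuclideanSpace ℝ (Fin 3)) :
    Measure (Icc (0 : ℝ) 1 → ℝ) :=
  (Q.withDensity fun ω => ENNReal.ofReal √(π / 2) * ENNReal.ofReal (besselPath β 0 ω 1)⁻¹).map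
    (besselPath β 0)

lemma lintegral_reweightedBesselLaw (hβ : ∀ t, Measurable (β t))
    {F : (Icc (0 : ℝ) 1 → ℝ) → ℝ≥0∞} (hF : Measurable F) :
    ∫⁻ p, F p ∂reweightedBesselLaw Q β =
      ENNReal.ofReal √(π / 2) * besselExpectation Q β F 0 := by
  have hpath : Measurable (besselPath β 0) :=
    measurable_besselPath hβ measurable_const measurable_id
  have hend : Measurable fun ω => besselPath β 0 ω 1 := (measurable_pi_apply 1).comp hpath
  have hFpath : Measurable fun ω => F (besselPath β 0 ω) := hF.comp hpath
  rw [reweightedBesselLaw, lintegral_map hF hpath,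
    lintegral_withDensity_eq_lintegral_mul _ (by fun_prop) hFpath]
  simp only [besselExpectation, Pi.mul_apply, mul_assoc,
    lintegral_const_mul' _ _ ENNReal.ofReal_ne_top]

lemma ofReal_sqrt_mul_ofReal_sqrt_inv :
    ENNReal.ofReal √(π / 2) * ENNReal.ofReal √(2 / π) = 1 := by
  rw [← ENNReal.ofReal_mul (Real.sqrt_nonneg _), ← Real.sqrt_mul (by positivity),
    div_mul_div_cancel₀' (by positivity)]
  simp

variable [IsProbabilityMeasure Q]

lemma besselExpectation_one (hβ : IsStdBMVec 3 Q β) (x : ℝ) :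
    besselExpectation Q β (fun _ => 1) x = besselSemigroup 1 (fun r => ENNReal.ofReal r⁻¹) |x| := by
  simpa [besselExpectation, besselPath, norm_smul, norm_axis] using
    hβ.lintegral_norm zero_le_one (h := fun r => ENNReal.ofReal r⁻¹) (by fun_prop) (x • axis)

lemma isProbabilityMeasure_reweightedBesselLaw (hβ : IsStdBMVec 3 Q β) :
    IsProbabilityMeasure (reweightedBesselLaw Q β) := by
  constructor
  rw [← lintegral_one, lintegral_reweightedBesselLaw hβ.measurable measurable_const,
    besselExpectation_one hβ, abs_zero, besselSemigroup_one_inv_zero,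
    ofReal_sqrt_mul_ofReal_sqrt_inv]

end BesselFromZero

section MeasureExt

lemma measure_eq_of_forall_lintegral_le {E : Type*} [MeasurableSpace E] [TopologicalSpace E]
    [HasOuterApproxClosed E] [BorelSpace E] {μ ν : Measure E} [IsFiniteMeasure μ]
    [IsFiniteMeasure ν] (huniv : μ univ = ν univ)
    (hle : ∀ f : E →ᵇ ℝ≥0, ∫⁻ x, f x ∂ν ≤ ∫⁻ x, f x ∂μ) : μ = ν := by
  refine ext_of_forall_lintegral_eq_of_IsFiniteMeasure fun f => (hle f).antisymm' ?_
  let C : ℝ≥0 := nndist f 0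
  let g : E →ᵇ ℝ≥0 := BoundedContinuousFunction.const E C - f
  have complement (ρ : Measure E) : ∫⁻ x, f x ∂ρ + ∫⁻ x, g x ∂ρ = C * ρ univ := by
    rw [← lintegral_add_left f.continuous.measurable.coe_nnreal_ennreal, ← lintegral_const]
    refine lintegral_congr fun x => ?_
    rw [← ENNReal.coe_add]
    exact congrArg _ (add_tsub_cancel_of_le (BoundedContinuousFunction.NNReal.upper_bound f x))
  refine (ENNReal.add_le_add_iff_right (g.lintegral_lt_top_of_nnreal ν).ne).1 ?_
  calc ∫⁻ x, f x ∂μ + ∫⁻ x, g x ∂ν ≤ ∫⁻ x, f x ∂μ + ∫⁻ x, g x ∂μ :=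
        add_le_add le_rfl (hle g)
    _ = ∫⁻ x, f x ∂ν + ∫⁻ x, g x ∂ν := by rw [complement, complement, huniv]

lemma measure_pi_eq_of_forall_lintegral_le {ι : Type*} {μ ν : Measure (ι → ℝ)}
    [IsFiniteMeasure μ] [IsFiniteMeasure ν] (huniv : μ univ = ν univ)
    (hle : ∀ (J : Finset ι) (f : (J → ℝ) →ᵇ ℝ≥0),
      ∫⁻ p, f (J.restrict p) ∂ν ≤ ∫⁻ p, f (J.restrict p) ∂μ) : μ = ν := by
  refine IsProjectiveLimit.unique (P := fun J => ν.map J.restrict) (fun J => ?_) fun J => rfl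
  have hJ : Measurable (J.restrict : (ι → ℝ) → J → ℝ) := Finset.measurable_restrict J
  refine measure_eq_of_forall_lintegral_le ?_ fun f => ?_
  · rw [Measure.map_apply hJ .univ, Measure.map_apply hJ .univ, preimage_univ, huniv]
  · have hf := f.continuous.measurable.coe_nnreal_ennreal
    simpa only [lintegral_map hf hJ] using hle J f

end MeasureExt

variable {Ω : Type*} [mΩ : MeasurableSpace Ω] {P : Measure Ω} [IsProbabilityMeasure P]
  {Ω' : Type*} [MeasurableSpace Ω'] {Q : Measure Ω'} [IsProbabilityMeasure Q]
  {β : ℝ → Ω' → EuclideanSpace ℝ (Fin 3)}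

lemma IsBrownianWrt.mul_measure_killed_le {𝓕 : Filtration ℝ mΩ} {X : ℝ → Ω → ℝ}
    (hX : IsBrownianWrt P 𝓕 X) (hβ : IsStdBMVec 3 Q β) {A : Set Ω} (hA : MeasurableSet[𝓕 0] A)
    {F : (Icc (0 : ℝ) 1 → ℝ) → ℝ≥0∞} (hF : Measurable F) {l : ℝ≥0∞} {δ : ℝ}
    (hl : ∀ x ∈ Icc 0 δ, l ≤ besselExpectation Q β F x) :
    l * P ((A ∩ {ω | |X 0 ω| ≤ δ}) \ zeroEvent X 0 1) ≤
      ENNReal.ofReal √(2 / π) * ∫⁻ ω in A \ zeroEvent X 0 1, F (fun s => |X s ω|) ∂P := by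
  have hV : MeasurableSet[𝓕 0] (A ∩ {ω | |X 0 ω| ≤ δ}) :=
    hA.inter ((measurable_abs.comp (hX.adapted 0 le_rfl)) measurableSet_Iic)
  set V := A ∩ {ω | |X 0 ω| ≤ δ}
  have mass := hX.setLIntegral_killed_path hβ hV (F := fun _ => 1) measurable_const
  rw [setLIntegral_one] at mass
  have start_le (x : ℝ) : ENNReal.ofReal |x| * besselExpectation Q β (fun _ => 1) |x| ≤
      ENNReal.ofReal |x| * ENNReal.ofReal √(2 / π) := by
    rcases (abs_nonneg x).eq_or_lt with h0 | hpos
    · simp [← h0]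
    · gcongr
      rw [besselExpectation_one hβ, abs_abs]
      exact besselSemigroup_one_inv_le hpos
  calc l * P (V \ zeroEvent X 0 1)
      ≤ ∫⁻ ω in V, l * (ENNReal.ofReal |X 0 ω| * besselExpectation Q β (fun _ => 1) |X 0 ω|) ∂P :=
        mass ▸ lintegral_const_mul_le _ _
    _ ≤ ∫⁻ ω in V, ENNReal.ofReal √(2 / π) *
          (ENNReal.ofReal |X 0 ω| * besselExpectation Q β F |X 0 ω|) ∂P := by
        refine setLIntegral_mono' (𝓕.le _ _ hV) fun ω hω => ?_
        calc _ ≤ l * (ENNReal.ofReal |X 0 ω| * ENNReal.ofReal √(2 / π)) := by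
              gcongr l * ?_; exact start_le _
          _ = ENNReal.ofReal √(2 / π) * (ENNReal.ofReal |X 0 ω| * l) := by ring
          _ ≤ _ := by gcongr; exact hl _ ⟨abs_nonneg _, hω.2⟩
    _ = ENNReal.ofReal √(2 / π) * ∫⁻ ω in V \ zeroEvent X 0 1, F (fun s => |X s ω|) ∂P := by
        rw [lintegral_const_mul' _ _ ENNReal.ofReal_ne_top, hX.setLIntegral_killed_path hβ hV hF]
    _ ≤ _ := by gcongr; exact inter_subset_left

variable {W : ℝ → Ω → ℝ}

lemma _root_.IsStdBM.mul_measure_lastZeroCell_le (hW : IsStdBM P W) (hβ : IsStdBMVec 3 Q β)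
    {F : (Icc (0 : ℝ) 1 → ℝ) → ℝ≥0∞} (hF : Measurable F) {l : ℝ≥0∞} {δ : ℝ}
    (hl : ∀ x ∈ Icc 0 δ, l ≤ besselExpectation Q β F x) {N j : ℕ} (hj : j < N) :
    l * P (lastZeroCell W N j ∩ {ω | meanderPath W (cellEnd N j) ω 0 ≤ δ}) ≤
      ENNReal.ofReal √(2 / π) *
        ∫⁻ ω in lastZeroCell W N j, F (meanderPath W (cellEnd N j) ω) ∂P := by
  have hpos := cellEnd_pos N j
  have hlt := cellEnd_lt_one_iff.2 hj
  set a := cellEnd N j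
  have hA : MeasurableSet[pastFiltration hW.measurable (a + (1 - a) * 0)]
      (zeroEvent W (j / (N + 1)) a) := by
    rw [mul_zero, add_zero]
    exact hW.isBrownianWrt.measurableSet_zeroEvent (by positivity)
  have cell := (hW.isBrownianWrt.rescale hpos.le (sub_pos.2 hlt)).mul_measure_killed_le hβ hA hF hl
  rw [zeroEvent_rescale hlt, inter_sdiff_right_comm] at cell
  simp only [abs_div, abs_of_nonneg (Real.sqrt_nonneg _)] at cell
  exact cell

lemma _root_.IsStdBM.tendsto_sum_measure_lastZeroCell_inter (hW : IsStdBM P W) {δ : ℝ}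
    (hδ : 0 < δ) :
    Tendsto (fun N => ∑ j ∈ Finset.range N,
      P (lastZeroCell W N j ∩ {ω | meanderPath W (cellEnd N j) ω 0 ≤ δ})) atTop (𝓝 1) := by
  have hV (a : ℝ) : MeasurableSet {ω | meanderPath W a ω 0 ≤ δ} :=
    (measurable_pi_apply 0).comp (hW.measurable_meanderPath measurable_const) measurableSet_Iic
  have limit := hW.tendsto_sum_setLIntegral_lastZeroCell
    (φ := fun a => {ω | meanderPath W a ω 0 ≤ δ}.indicator 1)
    (fun a => measurable_one.indicator (hV a)) ENNReal.one_ne_top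
    (fun a ω => indicator_le_self _ _ _) (y := 1) fun ω hω => ?_
  · simpa only [lintegral_indicator_one (hV _), Measure.restrict_apply (hV _), inter_comm,
      Pi.one_apply, lintegral_one, measure_univ] using limit
  · have start_zero : meanderPath W (lastZero W ω) ω 0 = 0 := by
      simp [meanderPath, (hW.isGreatest_lastZero ω).1.2]
    have hstart := tendsto_pi_nhds.1 (tendsto_meanderPath (hW.cont ω) hω) 0
    refine tendsto_const_nhds.congr' ?_
    filter_upwards [hstart.eventually_lt_const (start_zero ▸ hδ)] with a ha
    exact (indicator_of_mem (by exact ha.le) _).symm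

lemma _root_.IsStdBM.besselExpectation_zero_le (hW : IsStdBM P W) (hβ : IsStdBMVec 3 Q β)
    {f : (Icc (0 : ℝ) 1 → ℝ) → ℝ≥0} (hf : Continuous f) (hfm : Measurable f) {C : ℝ≥0}
    (hC : ∀ p, f p ≤ C) :
    besselExpectation Q β (fun p => f p) 0 ≤
      ENNReal.ofReal √(2 / π) * ∫⁻ ω, f (meanderPath W (lastZero W ω) ω) ∂P := by
  refine le_of_forall_lt fun l hl => ?_
  obtain ⟨l', hll', hl'⟩ := exists_between hl
  refine hll'.trans_le ?_
  obtain ⟨δ, hδ, hball⟩ := Metric.eventually_nhds_iff_ball.1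
    (lowerSemicontinuous_besselExpectation hβ.measurable hf hfm 0 l' hl')
  have near_zero : ∀ x ∈ Icc 0 (δ / 2), l' ≤ besselExpectation Q β (fun p => f p) x := by
    refine fun x hx => (hball x ?_).le
    rw [Metric.mem_ball, dist_zero_right, Real.norm_of_nonneg hx.1]
    linarith [hx.2]
  have cells (N : ℕ) : l' * ∑ j ∈ Finset.range N,
        P (lastZeroCell W N j ∩ {ω | meanderPath W (cellEnd N j) ω 0 ≤ δ / 2}) ≤
      ENNReal.ofReal √(2 / π) * ∑ j ∈ Finset.range N,
        ∫⁻ ω in lastZeroCell W N j, f (meanderPath W (cellEnd N j) ω) ∂P := by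
    rw [Finset.mul_sum, Finset.mul_sum]
    exact Finset.sum_le_sum fun j hj => hW.mul_measure_lastZeroCell_le hβ
      hfm.coe_nnreal_ennreal near_zero (Finset.mem_range.1 hj)
  have mass := hW.tendsto_sum_measure_lastZeroCell_inter (half_pos hδ)
  have mean := hW.tendsto_sum_setLIntegral_lastZeroCell
    (φ := fun a ω => f (meanderPath W a ω)) (y := fun ω => f (meanderPath W (lastZero W ω) ω))
    (fun a => (hfm.comp (hW.measurable_meanderPath measurable_const)).coe_nnreal_ennreal)
    (C := C) ENNReal.coe_ne_top (fun a ω => ENNReal.coe_le_coe.2 (hC _))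
    fun ω hω => ENNReal.tendsto_coe.2
      ((hf.tendsto _).comp (tendsto_meanderPath (hW.cont ω) hω))
  simpa only [mul_one] using le_of_tendsto_of_tendsto'
    (ENNReal.Tendsto.const_mul mass (Or.inl one_ne_zero))
    (ENNReal.Tendsto.const_mul mean (Or.inr ENNReal.ofReal_ne_top)) cells

lemma _root_.IsStdBM.map_meanderPath_lastZero (hW : IsStdBM P W) (hβ : IsStdBMVec 3 Q β) :
    P.map (fun ω => meanderPath W (lastZero W ω) ω) = reweightedBesselLaw Q β := by
  have hmeander := hW.measurable_meanderPath hW.measurable_lastZero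
  have := Measure.isProbabilityMeasure_map (μ := P) hmeander.aemeasurable
  have := isProbabilityMeasure_reweightedBesselLaw hβ
  refine measure_pi_eq_of_forall_lintegral_le (by simp only [measure_univ]) fun J f => ?_
  have hfm : Measurable fun p : Icc (0 : ℝ) 1 → ℝ => f (J.restrict p) :=
    f.continuous.measurable.comp (Finset.measurable_restrict J)
  have hf : Continuous fun p : Icc (0 : ℝ) 1 → ℝ => f (J.restrict p) :=
    f.continuous.comp (Finset.continuous_restrict J)
  rw [lintegral_reweightedBesselLaw hβ.measurable hfm.coe_nnreal_ennreal,
    lintegral_map hfm.coe_nnreal_ennreal hmeander]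
  calc _ ≤ ENNReal.ofReal √(π / 2) * (ENNReal.ofReal √(2 / π) *
          ∫⁻ ω, f (J.restrict (meanderPath W (lastZero W ω) ω)) ∂P) := by
        gcongr
        exact hW.besselExpectation_zero_le hβ hf hfm fun p =>
          BoundedContinuousFunction.NNReal.upper_bound f _
    _ = _ := by rw [← mul_assoc, ofReal_sqrt_mul_ofReal_sqrt_inv, one_mul]

end Conclusion

end Imhof

/-- Imhof's relation: for every measurable non-negative functional `F`
on paths on `[0,1]`, `E[F(m)] = √(π/2) · E[(1 / R(1)) · F(R)]`, where `m` is a standard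
Brownian meander and `R` a three-dimensional Bessel process started at `0`. -/
theorem imhof_relation
    {Ω : Type*} [MeasurableSpace Ω] (P : Measure Ω) [IsProbabilityMeasure P]
    {Ω' : Type*} [MeasurableSpace Ω'] (Q : Measure Ω') [IsProbabilityMeasure Q]
    (m : ℝ → Ω → ℝ) (hm : IsBrownianMeander P m)
    (β : ℝ → Ω' → EuclideanSpace ℝ (Fin 3)) (hβ : IsStdBMVec 3 Q β)
    (F : (Icc (0:ℝ) 1 → ℝ) → ℝ≥0∞) (hF : Measurable F) :
    ∫⁻ ω, F (fun s => m s ω) ∂P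
      = ENNReal.ofReal (Real.sqrt (π / 2)) *
          ∫⁻ ω, ENNReal.ofReal (1 / bessel3 β 1 ω) * F (fun s => bessel3 β s ω) ∂Q := by
  obtain ⟨W, hW, hmW⟩ := hm
  have meander_path (ω : Ω) :
      (fun s : Icc (0 : ℝ) 1 => m s ω) = Imhof.meanderPath W (lastZero W ω) ω := by
    ext s
    rw [hmW ω s s.2, Imhof.meanderPath, mul_comm]
  have bessel_path (ω : Ω') :
      (fun s : Icc (0 : ℝ) 1 => bessel3 β s ω) = Imhof.besselPath β 0 ω := by
    ext s
    rw [Imhof.besselPath, zero_smul, zero_add, bessel3]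
  have bessel_end (ω : Ω') : bessel3 β 1 ω = Imhof.besselPath β 0 ω 1 :=
    congrFun (bessel_path ω) 1
  simp only [meander_path, bessel_path, bessel_end, one_div]
  rw [← lintegral_map hF (hW.measurable_meanderPath hW.measurable_lastZero),
    hW.map_meanderPath_lastZero hβ, Imhof.lintegral_reweightedBesselLaw hβ.measurable hF,
    Imhof.besselExpectation]
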